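/- arXiv:2111.07913 — 9 statements merged into one kernel-verified Lean document; each statement's English description precedes it below -/
import Mathlib

section
/- Let A ∈ ℝ^{m×n} have rank m and let P = {x ∈ ℝⁿ : Ax = b, x ≥ 0} for some b ∈ ℝ^m. Then there is an absolute constant C > 0 (independent of m, n, A, b) such that the circuit diameter of P is at most C · m · min{m, n − m} · log(m + κ_A). -/
open Matrix
open scoped BigOperators

noncomputable section
open Classical

/-- The set of elementary vectors of `ker(A)`: support-minimal nonzero kernel vectors. -/
def elemVecs {α β : Type} [Fintype α] [Fintype β] (A : Matrix α β ℝ) : Set (β → ℝ) :=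
  {g | A.mulVec g = 0 ∧ g ≠ 0 ∧
    ∀ h : β → ℝ, A.mulVec h = 0 → h ≠ 0 →
      ¬ ({i | h i ≠ 0} ⊂ {i | g i ≠ 0})}

/-- The circuit imbalance measure `κ_A`. -/
def circImb {α β : Type} [Fintype α] [Fintype β] (A : Matrix α β ℝ) : ℝ :=
  sSup {r : ℝ | ∃ g ∈ elemVecs A, ∃ i j, g i ≠ 0 ∧ g j ≠ 0 ∧ r = |g j| / |g i|}

/-- A circuit walk in `P`: each step adds an elementary vector, and each step is maximal. -/
def IsCircuitWalk {α β : Type} [Fintype α] [Fintype β] (A : Matrix α β ℝ)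
    (P : Set (β → ℝ)) {k : ℕ} (x : Fin (k + 1) → β → ℝ) : Prop :=
  (∀ i, x i ∈ P) ∧
  ∀ i : Fin k, ∃ g ∈ elemVecs A,
    x i.succ = x i.castSucc + g ∧
    ∀ ε : ℝ, 0 < ε → x i.castSucc + (1 + ε) • g ∉ P


/-! ### Auxiliary lemmas -/

lemma exists_ratio {β : Type} [Fintype β] (p q : β → ℝ) (hp : ∀ i, 0 ≤ p i) (hq : ∃ i, 0 < q i) :
    ∃ l : ℝ, 0 ≤ l ∧ (∀ i, l * q i ≤ p i) ∧ ∃ i, 0 < q i ∧ l * q i = p i := by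
  obtain ⟨i0, hi0⟩ := hq
  obtain ⟨i, hi, hmin⟩ := Finset.exists_min_image (Finset.univ.filter fun i => 0 < q i)
    (fun i => p i / q i) ⟨i0, by simpa using hi0⟩
  simp only [Finset.mem_filter, Finset.mem_univ, true_and] at hi hmin
  refine ⟨p i / q i, div_nonneg (hp i) hi.le, fun j => ?_, i, hi, by field_simp⟩
  by_cases hj : 0 < q j
  · have := hmin j hj
    rwa [le_div_iff₀ hj] at this
  · have h1 : p i / q i * q j ≤ 0 :=
      mul_nonpos_of_nonneg_of_nonpos (div_nonneg (hp i) hi.le) (not_lt.mp hj)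
    exact h1.trans (hp j)

lemma elem_smul {m n : ℕ} {A : Matrix (Fin m) (Fin n) ℝ} {g : Fin n → ℝ} (hg : g ∈ elemVecs A)
    {c : ℝ} (hc : c ≠ 0) : c • g ∈ elemVecs A := by
  obtain ⟨h1, h2, h3⟩ := hg
  refine ⟨by rw [Matrix.mulVec_smul, h1, smul_zero], smul_ne_zero hc h2, fun h ha hb => ?_⟩
  have : {i | (c • g) i ≠ 0} = {i | g i ≠ 0} := by
    ext i; simp [hc]
  rw [this]
  exact h3 h ha hb

lemma elem_prop {m n : ℕ} {A : Matrix (Fin m) (Fin n) ℝ} {g g' : Fin n → ℝ}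
    (hg : g ∈ elemVecs A) (hg' : g' ∈ elemVecs A) (hs : {i | g i ≠ 0} = {i | g' i ≠ 0})
    {i : Fin n} (hi : g i ≠ 0) : ∀ j, g' j = (g' i / g i) * g j := by
  by_contra hcon
  push Not at hcon
  obtain ⟨j, hj⟩ := hcon
  have hk : A.mulVec (g' - (g' i / g i) • g) = 0 := by
    rw [Matrix.mulVec_sub, Matrix.mulVec_smul, hg.1, hg'.1]; simp
  have hne : g' - (g' i / g i) • g ≠ 0 := by
    intro h0
    have := congrFun h0 j
    simp only [Pi.sub_apply, Pi.smul_apply, smul_eq_mul, Pi.zero_apply] at this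
    exact hj (by linarith)
  apply hg.2.2 _ hk hne
  rw [Set.ssubset_iff_of_subset]
  · refine ⟨i, hi, ?_⟩
    simp [hi]
  · intro l hl
    by_contra hgl
    simp only [Set.mem_ofPred_eq, not_not] at hgl
    have : l ∉ {i | g' i ≠ 0} := by rw [← hs]; simpa using hgl
    simp only [Set.mem_ofPred_eq, not_not] at this
    apply hl
    simp [hgl, this]

lemma imb_bdd {m n : ℕ} (A : Matrix (Fin m) (Fin n) ℝ) :
    BddAbove {r : ℝ | ∃ g ∈ elemVecs A, ∃ i j, g i ≠ 0 ∧ g j ≠ 0 ∧ r = |g j| / |g i|} := by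
  let F : Set (Fin n) × Fin n × Fin n → ℝ := fun p =>
    if h : ∃ g ∈ elemVecs A, {i | g i ≠ 0} = p.1 then
      |h.choose p.2.2| / |h.choose p.2.1| else 0
  refine ((Set.finite_range F).subset ?_).bddAbove
  rintro r ⟨g, hg, i, j, hi, hj, rfl⟩
  refine ⟨({i | g i ≠ 0}, i, j), ?_⟩
  have h : ∃ g' ∈ elemVecs A, {i | g' i ≠ 0} = {i | g i ≠ 0} := ⟨g, hg, rfl⟩
  have hF : F ({i | g i ≠ 0}, i, j) = |h.choose j| / |h.choose i| := dif_pos h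
  rw [hF]
  obtain ⟨h1, h2⟩ := h.choose_spec
  have hp := elem_prop hg h1 h2.symm hi
  have hci : h.choose i ≠ 0 := by
    have : i ∈ {i | h.choose i ≠ 0} := by rw [h2]; exact hi
    exact this
  have e1 : |h.choose j| = |h.choose i| / |g i| * |g j| := by
    rw [hp j, abs_mul, abs_div]
  have a1 : |h.choose i| ≠ 0 := abs_ne_zero.mpr hci
  have a2 : |g i| ≠ 0 := abs_ne_zero.mpr hi
  rw [e1]
  field_simp

lemma imb_one {m n : ℕ} {A : Matrix (Fin m) (Fin n) ℝ} {g : Fin n → ℝ}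
    (hg : g ∈ elemVecs A) : 1 ≤ circImb A := by
  obtain ⟨i, hi⟩ := Function.ne_iff.mp hg.2.1
  refine le_csSup (imb_bdd A) ⟨g, hg, i, i, hi, hi, ?_⟩
  rw [div_self (abs_ne_zero.mpr hi)]

lemma imb_le {m n : ℕ} {A : Matrix (Fin m) (Fin n) ℝ} {g : Fin n → ℝ}
    (hg : g ∈ elemVecs A) {i : Fin n} (hi : g i ≠ 0) (j : Fin n) :
    |g j| ≤ circImb A * |g i| := by
  by_cases hj : g j = 0
  · rw [hj, abs_zero]
    exact mul_nonneg (zero_le_one.trans (imb_one hg)) (abs_nonneg _)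
  · rw [← div_le_iff₀ (abs_pos.mpr hi)]
    exact le_csSup (imb_bdd A) ⟨g, hg, i, j, hi, hj, rfl⟩

/-- scaled ratio lemma -/
lemma ratio_sc {n : ℕ} (z h : Fin n → ℝ) (hp : ∃ i, 0 < h i * z i)
    (hs : ∀ i, z i = 0 → h i = 0) :
    ∃ l : ℝ, 0 < l ∧ (∀ i, ∃ c, 0 ≤ c ∧ z i - l * h i = c * z i) ∧
      ∃ i, z i ≠ 0 ∧ l * h i = z i := by
  obtain ⟨l, hl, h1, i, hi, h2⟩ := exists_ratio (fun i => z i * z i) (fun i => h i * z i)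
    (fun i => mul_self_nonneg _) hp
  have hzi : z i ≠ 0 := by rintro h0; simp [h0] at hi
  refine ⟨l, ?_, fun j => ?_, i, hzi, ?_⟩
  · rcases hl.eq_or_lt with h0 | h0
    · rw [← h0] at h2
      have : z i * z i = 0 := by linarith
      exact absurd (mul_self_eq_zero.mp this) hzi
    · exact h0
  · by_cases hj : z j = 0
    · exact ⟨0, le_rfl, by rw [hs j hj, hj]; ring⟩
    · refine ⟨(z j - l * h j) / z j, ?_, by field_simp⟩
      have h3 : (z j - l * h j) / z j = (z j * z j - l * (h j * z j)) / (z j * z j) := by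
        field_simp
      rw [h3]
      exact div_nonneg (by linarith [h1 j]) (mul_self_nonneg _)
  · have : (l * h i) * z i = z i * z i := by rw [← h2]; ring
    exact mul_right_cancel₀ hzi this

lemma exists_elem_sc {m n : ℕ} (A : Matrix (Fin m) (Fin n) ℝ) :
    ∀ (k : ℕ) (z : Fin n → ℝ), (Finset.univ.filter fun i => z i ≠ 0).card ≤ k →
      A.mulVec z = 0 → z ≠ 0 →
      ∃ g ∈ elemVecs A, ∀ i, ∃ c, 0 ≤ c ∧ g i = c * z i := by
  intro k
  induction k with
  | zero =>
    intro z hk _ hz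
    exfalso
    apply hz
    ext i
    by_contra hi
    have : (Finset.univ.filter fun i => z i ≠ 0) = ∅ := by
      rw [← Finset.card_eq_zero]; omega
    have h2 : i ∈ (Finset.univ.filter fun i => z i ≠ 0) := by simpa using hi
    rw [this] at h2
    simp at h2
  | succ k ih =>
    intro z hk hA hz
    by_cases hel : z ∈ elemVecs A
    · exact ⟨z, hel, fun i => ⟨1, zero_le_one, by ring⟩⟩
    have : ∃ h : Fin n → ℝ, A.mulVec h = 0 ∧ h ≠ 0 ∧ {i | h i ≠ 0} ⊂ {i | z i ≠ 0} := by
      by_contra hcon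
      push Not at hcon
      exact hel ⟨hA, hz, hcon⟩
    have : ∃ h : Fin n → ℝ, A.mulVec h = 0 ∧ {i | h i ≠ 0} ⊂ {i | z i ≠ 0} ∧
        ∃ i, 0 < h i * z i := by
      obtain ⟨h, h1, h2, h3⟩ := this
      obtain ⟨i, hi⟩ := Function.ne_iff.mp h2
      have hi' : h i ≠ 0 := hi
      have hzi : z i ≠ 0 := h3.1 hi
      rcases lt_or_gt_of_ne (mul_ne_zero hi' hzi) with hlt | hgt
      · refine ⟨-h, by rw [Matrix.mulVec_neg, h1, neg_zero], by simpa using h3, i, ?_⟩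
        simp only [Pi.neg_apply]; linarith
      · exact ⟨h, h1, h3, i, hgt⟩
    obtain ⟨h, h1, h3, h4⟩ := this
    have hsub : ∀ i, z i = 0 → h i = 0 := by
      intro i hi
      by_contra hh
      exact (h3.1 hh) hi
    obtain ⟨l, hl, hsc, i, hi, hti⟩ := ratio_sc z h h4 hsub
    obtain ⟨j, hj, hj2⟩ := Set.exists_of_ssubset h3
    have hj3 : h j = 0 := by simpa using hj2
    have hne : z - l • h ≠ 0 := by
      intro h0
      have := congrFun h0 j
      simp [hj3] at this
      exact hj this
    have hcard : (Finset.univ.filter fun i => (z - l • h) i ≠ 0).card ≤ k := by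
      have : (Finset.univ.filter fun i => (z - l • h) i ≠ 0) ⊂
          (Finset.univ.filter fun i => z i ≠ 0) := by
        rw [Finset.ssubset_iff_of_subset]
        · exact ⟨i, by simpa using hi, by simp [hti]⟩
        · intro a ha
          simp only [Finset.mem_filter, Finset.mem_univ, true_and] at ha ⊢
          intro h0
          apply ha
          simp [h0, hsub a h0]
      have := Finset.card_lt_card this
      omega
    obtain ⟨g, hg, hgs⟩ := ih _ hcard
      (by rw [Matrix.mulVec_sub, Matrix.mulVec_smul, hA, h1]; simp) hne
    refine ⟨g, hg, fun a => ?_⟩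
    obtain ⟨c, hc, hc2⟩ := hgs a
    obtain ⟨d, hd, hd2⟩ := hsc a
    refine ⟨c * d, mul_nonneg hc hd, ?_⟩
    rw [hc2]
    simp only [Pi.sub_apply, Pi.smul_apply, smul_eq_mul]
    rw [hd2]; ring

lemma exists_elem_conf {m n : ℕ} (A : Matrix (Fin m) (Fin n) ℝ) (z : Fin n → ℝ)
    (hA : A.mulVec z = 0) (hz : z ≠ 0) :
    ∃ g ∈ elemVecs A, (∀ i, ∃ c, 0 ≤ c ∧ c ≤ 1 ∧ g i = c * z i) ∧ ∃ i, z i ≠ 0 ∧ g i = z i := by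
  obtain ⟨g, hg, hsc⟩ := exists_elem_sc A _ z le_rfl hA hz
  have hpos : ∃ i, 0 < g i * z i := by
    obtain ⟨i, hi⟩ := Function.ne_iff.mp hg.2.1
    obtain ⟨c, hc, hc2⟩ := hsc i
    refine ⟨i, ?_⟩
    have hi' : g i ≠ 0 := hi
    rw [hc2] at hi' ⊢
    have hc0 : c ≠ 0 := left_ne_zero_of_mul hi'
    have hz0 : z i ≠ 0 := right_ne_zero_of_mul hi'
    have : 0 < c := lt_of_le_of_ne hc (Ne.symm hc0)
    have := mul_pos this (mul_self_pos.mpr hz0)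
    linarith
  have hsub : ∀ i, z i = 0 → g i = 0 := by
    intro i hi
    obtain ⟨c, hc, hc2⟩ := hsc i
    rw [hc2, hi, mul_zero]
  obtain ⟨l, hl, h1, i, hi, hti⟩ := ratio_sc z g hpos hsub
  refine ⟨l • g, elem_smul hg hl.ne', fun j => ?_, i, hi, by simpa using hti⟩
  by_cases hj : z j = 0
  · exact ⟨0, le_rfl, zero_le_one, by simp [hsub j hj]⟩
  obtain ⟨c, hc, hc2⟩ := hsc j
  obtain ⟨d, hd, hd2⟩ := h1 j
  refine ⟨l * c, mul_nonneg hl.le hc, ?_, ?_⟩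
  · have : (1 - l * c) * z j = d * z j := by rw [← hd2, hc2]; ring
    have := mul_right_cancel₀ hj this
    linarith
  · simp [hc2]; ring

/-- kernel vectors supported in `U` -/
def kerOn {m n : ℕ} (A : Matrix (Fin m) (Fin n) ℝ) (U : Set (Fin n)) :
    Submodule ℝ (Fin n → ℝ) where
  carrier := {v | A.mulVec v = 0 ∧ ∀ i, i ∉ U → v i = 0}
  add_mem' := by
    rintro a b ⟨ha, ha'⟩ ⟨hb, hb'⟩
    refine ⟨by rw [Matrix.mulVec_add, ha, hb, add_zero], fun i hi => ?_⟩
    simp [ha' i hi, hb' i hi]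
  zero_mem' := ⟨by simp, by simp⟩
  smul_mem' := by
    rintro c a ⟨ha, ha'⟩
    refine ⟨by rw [Matrix.mulVec_smul, ha, smul_zero], fun i hi => ?_⟩
    simp [ha' i hi]

lemma mem_kerOn {m n : ℕ} {A : Matrix (Fin m) (Fin n) ℝ} {U : Set (Fin n)} {v : Fin n → ℝ} :
    v ∈ kerOn A U ↔ A.mulVec v = 0 ∧ ∀ i, i ∉ U → v i = 0 := Iff.rfl

lemma kerOn_mono {m n : ℕ} (A : Matrix (Fin m) (Fin n) ℝ) {U V : Set (Fin n)} (h : U ⊆ V) :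
    kerOn A U ≤ kerOn A V := fun _ hv => ⟨hv.1, fun i hi => hv.2 i fun hu => hi (h hu)⟩

lemma decomp {m n : ℕ} (A : Matrix (Fin m) (Fin n) ℝ) :
    ∀ (d : ℕ) (z : Fin n → ℝ), A.mulVec z = 0 →
      Module.finrank ℝ (kerOn A {i | z i ≠ 0}) ≤ d →
      ∃ (k : ℕ) (h : Fin k → Fin n → ℝ), k ≤ d ∧ (∀ a, h a ∈ elemVecs A) ∧
        (∀ a i, ∃ c, 0 ≤ c ∧ c ≤ 1 ∧ h a i = c * z i) ∧ z = ∑ a, h a := by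
  intro d
  induction d with
  | zero =>
    intro z hz hd
    refine ⟨0, Fin.elim0, le_rfl, fun a => a.elim0, fun a => a.elim0, ?_⟩
    have h0 : kerOn A {i | z i ≠ 0} = ⊥ := Submodule.finrank_eq_zero.mp (by omega)
    have hm : z ∈ kerOn A {i | z i ≠ 0} := ⟨hz, fun i hi => by simpa using hi⟩
    rw [h0, Submodule.mem_bot] at hm
    simp [hm]
  | succ d ih =>
    intro z hz hd
    by_cases hz0 : z = 0
    · exact ⟨0, Fin.elim0, Nat.zero_le _, fun a => a.elim0, fun a => a.elim0, by simp [hz0]⟩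
    obtain ⟨g, hg, hc, i, hi, hgi⟩ := exists_elem_conf A z hz hz0
    have hz' : A.mulVec (z - g) = 0 := by rw [Matrix.mulVec_sub, hz, hg.1, sub_zero]
    have hlt : kerOn A {i | (z - g) i ≠ 0} < kerOn A {i | z i ≠ 0} := by
      refine lt_of_le_of_ne (kerOn_mono A ?_) ?_
      · intro a ha h0
        obtain ⟨c, _, _, hc2⟩ := hc a
        apply ha
        simp [hc2, h0]
      · intro heq
        have hm : z ∈ kerOn A {i | z i ≠ 0} := ⟨hz, fun i hi => by simpa using hi⟩
        rw [← heq] at hm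
        exact hi (hm.2 i (by simp [hgi]))
    have := Submodule.finrank_lt_finrank_of_lt hlt
    obtain ⟨k, h, hk, h1, h2, h3⟩ := ih (z - g) hz' (by omega)
    refine ⟨k + 1, Fin.cons g h, by omega, ?_, ?_, ?_⟩
    · intro a
      refine Fin.cases ?_ (fun a => ?_) a
      · simpa using hg
      · simpa using h1 a
    · intro a
      refine Fin.cases ?_ (fun a => ?_) a
      · simpa using hc
      · intro j
        obtain ⟨c, hc0, hc1, hc2⟩ := h2 a j
        obtain ⟨e, he0, he1, he2⟩ := hc j
        refine ⟨c * (1 - e), mul_nonneg hc0 (by linarith), ?_, ?_⟩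
        · exact mul_le_one₀ hc1 (by linarith) (by linarith)
        · simp only [Fin.cons_succ]
          rw [hc2, Pi.sub_apply, he2]; ring
    · rw [Fin.sum_univ_succ]
      simp only [Fin.cons_zero, Fin.cons_succ]
      rw [← h3]; abel

lemma extreme_ker {m n : ℕ} {A : Matrix (Fin m) (Fin n) ℝ} {b : Fin m → ℝ} {y : Fin n → ℝ}
    (hy : y ∈ Set.extremePoints ℝ {z : Fin n → ℝ | A.mulVec z = b ∧ 0 ≤ z})
    {v : Fin n → ℝ} (hv : A.mulVec v = 0) (hs : ∀ i, y i = 0 → v i = 0) : v = 0 := by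
  by_contra hne
  obtain ⟨i0, hi0⟩ := Function.ne_iff.mp hne
  have hyP := hy.1
  obtain ⟨l, hl, h1, i, hi, h2⟩ := exists_ratio y (fun i => |v i|) (fun i => hyP.2 i)
    ⟨i0, abs_pos.mpr hi0⟩
  have hlp : l ≠ 0 := by
    rintro rfl
    have := hs i (by linarith)
    simp [this] at hi
  have hP : ∀ s : ℝ, |s| = l → y + s • v ∈ {z : Fin n → ℝ | A.mulVec z = b ∧ 0 ≤ z} := by
    intro s hsl
    refine ⟨by rw [Matrix.mulVec_add, Matrix.mulVec_smul, hv, hyP.1]; simp, fun j => ?_⟩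
    have h3 := h1 j
    rw [← hsl, ← abs_mul] at h3
    have := neg_abs_le (s * v j)
    simp only [Pi.zero_apply, Pi.add_apply, Pi.smul_apply, smul_eq_mul]
    linarith
  have := hy.2 (hP l (abs_of_nonneg hl)) (hP (-l) (by rw [abs_neg, abs_of_nonneg hl]))
    ⟨1/2, 1/2, by norm_num, by norm_num, by norm_num, by
      ext j; simp; ring⟩
  have h4 := congrFun this i0
  simp at h4
  rcases h4 with h4 | h4
  · exact hlp h4
  · exact hi0 h4

lemma card_supp_le {m n : ℕ} {A : Matrix (Fin m) (Fin n) ℝ} {b : Fin m → ℝ} {y : Fin n → ℝ}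
    (hy : y ∈ Set.extremePoints ℝ {z : Fin n → ℝ | A.mulVec z = b ∧ 0 ≤ z}) :
    (Finset.univ.filter fun i => y i ≠ 0).card ≤ m := by
  let E : ({i // y i ≠ 0} → ℝ) →ₗ[ℝ] (Fin n → ℝ) := Function.ExtendByZero.linearMap ℝ Subtype.val
  have hE1 : ∀ f (i : {i // y i ≠ 0}), E f i = f i := by
    intro f i
    exact Subtype.val_injective.extend_apply f 0 i
  have hE0 : ∀ f i, y i = 0 → E f i = 0 := by
    intro f i hi
    refine Function.extend_apply' (f := (Subtype.val : {i // y i ≠ 0} → Fin n)) f 0 i ?_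
    rintro ⟨a, rfl⟩
    exact a.2 hi
  have hinj : Function.Injective (A.mulVecLin ∘ₗ E) := by
    rw [← LinearMap.ker_eq_bot, LinearMap.ker_eq_bot']
    intro f hf
    have := extreme_ker hy (v := E f) hf (hE0 f)
    ext i
    have h5 := hE1 f i
    rw [this] at h5
    exact h5.symm
  have := LinearMap.finrank_le_finrank_of_injective hinj
  simp only [Module.finrank_fintype_fun_eq_card, Fintype.card_fin] at this
  rwa [Fintype.card_subtype] at this

lemma finrank_kerOn {m n : ℕ} {A : Matrix (Fin m) (Fin n) ℝ} {b : Fin m → ℝ} {x y : Fin n → ℝ}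
    (hA : A.rank = m)
    (hx : x ∈ Set.extremePoints ℝ {z : Fin n → ℝ | A.mulVec z = b ∧ 0 ≤ z})
    (hy : y ∈ Set.extremePoints ℝ {z : Fin n → ℝ | A.mulVec z = b ∧ 0 ≤ z}) :
    Module.finrank ℝ (kerOn A {i | x i ≠ 0 ∨ y i ≠ 0}) ≤ min m (n - m) := by
  refine le_min ?_ ?_
  · let F : kerOn A {i | x i ≠ 0 ∨ y i ≠ 0} →ₗ[ℝ] ({i // y i ≠ 0} → ℝ) :=
      LinearMap.funLeft ℝ ℝ Subtype.val ∘ₗ (kerOn A {i | x i ≠ 0 ∨ y i ≠ 0}).subtype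
    have hinj : Function.Injective F := by
      rw [← LinearMap.ker_eq_bot, LinearMap.ker_eq_bot']
      rintro ⟨v, hv, hv2⟩ hF
      have : v = 0 := by
        refine extreme_ker hx hv fun i hi => ?_
        by_cases hyi : y i = 0
        · exact hv2 i (by simp [hi, hyi])
        · exact congrFun hF ⟨i, hyi⟩
      exact Subtype.ext this
    have := LinearMap.finrank_le_finrank_of_injective hinj
    simp only [Module.finrank_fintype_fun_eq_card] at this
    rw [Fintype.card_subtype] at this
    exact this.trans (card_supp_le hy)
  · have h1 := LinearMap.finrank_range_add_finrank_ker A.mulVecLin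
    have h2 : Module.finrank ℝ (LinearMap.range A.mulVecLin) = m := hA
    have h3 : kerOn A {i | x i ≠ 0 ∨ y i ≠ 0} ≤ LinearMap.ker A.mulVecLin := fun v hv => hv.1
    have h4 := Submodule.finrank_mono h3
    simp only [Module.finrank_fintype_fun_eq_card, Fintype.card_fin] at h1
    omega

/-- sum of the coordinates outside of the support of `y` -/
def phi {n : ℕ} (y : Fin n → ℝ) : (Fin n → ℝ) →ₗ[ℝ] ℝ :=
  ∑ i ∈ Finset.univ.filter (fun i => y i = 0), LinearMap.proj i

lemma phi_apply {n : ℕ} (y x : Fin n → ℝ) :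
    phi y x = ∑ i ∈ Finset.univ.filter (fun i => y i = 0), x i := by
  simp [phi, LinearMap.sum_apply]

lemma phi_nonneg {n : ℕ} (y x : Fin n → ℝ) (hx : 0 ≤ x) : 0 ≤ phi y x := by
  rw [phi_apply]
  exact Finset.sum_nonneg fun i _ => hx i

lemma phi_self {n : ℕ} (y : Fin n → ℝ) : phi y y = 0 := by
  rw [phi_apply]
  exact Finset.sum_eq_zero fun i hi => (Finset.mem_filter.mp hi).2

lemma elem_phi {m n : ℕ} {A : Matrix (Fin m) (Fin n) ℝ} {b : Fin m → ℝ} {x y g : Fin n → ℝ}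
    (hy : y ∈ Set.extremePoints ℝ {z : Fin n → ℝ | A.mulVec z = b ∧ 0 ≤ z})
    (hx : 0 ≤ x) (hg : g ∈ elemVecs A)
    (hc : ∀ i, ∃ c, 0 ≤ c ∧ c ≤ 1 ∧ g i = c * (y - x) i) :
    0 < - phi y g ∧ ∀ i, |g i| ≤ circImb A * (- phi y g) := by
  have hneg : ∀ j, y j = 0 → 0 ≤ - g j := by
    intro j hj
    obtain ⟨c, h0, h1, h2⟩ := hc j
    rw [h2, Pi.sub_apply, hj]
    have := mul_nonneg h0 (hx j)
    linarith
  have hex : ∃ j, y j = 0 ∧ g j ≠ 0 := by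
    by_contra hcon
    push Not at hcon
    exact hg.2.1 (extreme_ker hy hg.1 hcon)
  obtain ⟨j, hj, hgj⟩ := hex
  have hle : |g j| ≤ - phi y g := by
    rw [abs_of_nonpos (by linarith [hneg j hj]), phi_apply, ← Finset.sum_neg_distrib]
    exact Finset.single_le_sum (f := fun i => - g i)
      (fun i hi => hneg i (Finset.mem_filter.mp hi).2) (by simpa using hj)
  refine ⟨lt_of_lt_of_le (abs_pos.mpr hgj) hle, fun i => ?_⟩
  exact (imb_le hg hgj i).trans
    (mul_le_mul_of_nonneg_left hle (zero_le_one.trans (imb_one hg)))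

lemma decomp_yx {m n : ℕ} {A : Matrix (Fin m) (Fin n) ℝ} {b : Fin m → ℝ} {x0 x y : Fin n → ℝ}
    (hA : A.rank = m)
    (hx0 : x0 ∈ Set.extremePoints ℝ {z : Fin n → ℝ | A.mulVec z = b ∧ 0 ≤ z})
    (hy : y ∈ Set.extremePoints ℝ {z : Fin n → ℝ | A.mulVec z = b ∧ 0 ≤ z})
    (hx : A.mulVec x = b ∧ 0 ≤ x) (hU : ∀ i, x0 i = 0 → y i = 0 → x i = 0) :
    ∃ (k : ℕ) (h : Fin k → Fin n → ℝ), k ≤ min m (n - m) ∧ (∀ a, h a ∈ elemVecs A) ∧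
        (∀ a i, ∃ c, 0 ≤ c ∧ c ≤ 1 ∧ h a i = c * (y - x) i) ∧ y - x = ∑ a, h a := by
  refine decomp A _ (y - x) (by rw [Matrix.mulVec_sub, hx.1, hy.1.1, sub_self]) ?_
  refine le_trans (Submodule.finrank_mono (kerOn_mono A ?_)) (finrank_kerOn hA hx0 hy)
  intro i hi
  by_contra hcon
  have hcon' : x0 i = 0 ∧ y i = 0 := by
    by_contra h
    apply hcon
    rcases not_and_or.mp h with h | h
    · exact Or.inl h
    · exact Or.inr h
  apply hi
  simp [hU i hcon'.1 hcon'.2, hcon'.2]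

lemma dist_le {m n : ℕ} {A : Matrix (Fin m) (Fin n) ℝ} {b : Fin m → ℝ} {x0 x y : Fin n → ℝ}
    (hA : A.rank = m)
    (hx0 : x0 ∈ Set.extremePoints ℝ {z : Fin n → ℝ | A.mulVec z = b ∧ 0 ≤ z})
    (hy : y ∈ Set.extremePoints ℝ {z : Fin n → ℝ | A.mulVec z = b ∧ 0 ≤ z})
    (hx : A.mulVec x = b ∧ 0 ≤ x) (hU : ∀ i, x0 i = 0 → y i = 0 → x i = 0) (i : Fin n) :
    |y i - x i| ≤ circImb A * phi y x := by
  obtain ⟨k, h, hk, h1, h2, h3⟩ := decomp_yx hA hx0 hy hx hU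
  have e1 : y i - x i = ∑ a, h a i := by
    have := congrFun h3 i
    simpa using this
  have e2 : phi y x = ∑ a, - phi y (h a) := by
    rw [Finset.sum_neg_distrib, ← map_sum, ← h3, map_sub, phi_self]; ring
  rw [e1, e2, Finset.mul_sum]
  refine (Finset.abs_sum_le_sum_abs _ _).trans (Finset.sum_le_sum fun a _ => ?_)
  exact (elem_phi hy hx.2 (h1 a) (h2 a)).2 i

lemma step_exists {m n : ℕ} {A : Matrix (Fin m) (Fin n) ℝ} {b : Fin m → ℝ} {x0 x y : Fin n → ℝ}
    (hA : A.rank = m)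
    (hx0 : x0 ∈ Set.extremePoints ℝ {z : Fin n → ℝ | A.mulVec z = b ∧ 0 ≤ z})
    (hy : y ∈ Set.extremePoints ℝ {z : Fin n → ℝ | A.mulVec z = b ∧ 0 ≤ z})
    (hx : A.mulVec x = b ∧ 0 ≤ x) (hU : ∀ i, x0 i = 0 → y i = 0 → x i = 0) (hne : x ≠ y) :
    ∃ x' : Fin n → ℝ, (A.mulVec x' = b ∧ 0 ≤ x') ∧ (∀ i, x0 i = 0 → y i = 0 → x' i = 0) ∧
      (∃ g ∈ elemVecs A, x' = x + g ∧
        ∀ ε : ℝ, 0 < ε → x + (1 + ε) • g ∉ {z : Fin n → ℝ | A.mulVec z = b ∧ 0 ≤ z}) ∧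
      1 ≤ min m (n - m) ∧ 0 < phi y x ∧
      phi y x' ≤ (1 - 1 / ((min m (n - m) : ℕ) : ℝ)) * phi y x ∧
      (∀ i, x i ≤ ((min m (n - m) : ℕ) : ℝ) * y i → x' i ≤ ((min m (n - m) : ℕ) : ℝ) * y i) ∧
      ∃ i, x' i = 0 ∧ 0 < x i ∧ (x i ≤ ((min m (n - m) : ℕ) : ℝ) * y i →
        phi y x ≤ ((min m (n - m) : ℕ) : ℝ) ^ 2 * (2 * m) * circImb A * y i) := by
  obtain ⟨k, h, hk, h1, h2, h3⟩ := decomp_yx hA hx0 hy hx hU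
  have hk0 : 0 < k := by
    rcases Nat.eq_zero_or_pos k with h0 | h0
    · subst h0
      simp at h3
      exact absurd (sub_eq_zero.mp h3).symm hne
    · exact h0
  have hr1 : 1 ≤ min m (n - m) := by omega
  generalize hr : min m (n - m) = r at *
  have hrR : (1 : ℝ) ≤ (r : ℝ) := by exact_mod_cast hr1
  have hkR : (k : ℝ) ≤ (r : ℝ) := by exact_mod_cast hk
  have e2 : phi y x = ∑ a, - phi y (h a) := by
    rw [Finset.sum_neg_distrib, ← map_sum, ← h3, map_sub, phi_self]; ring
  have hphi : 0 < phi y x := by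
    rw [e2]
    exact Finset.sum_pos (fun a _ => (elem_phi hy hx.2 (h1 a) (h2 a)).1) ⟨⟨0, hk0⟩, by simp⟩
  have hbig : ∃ a, phi y x / r ≤ - phi y (h a) := by
    by_contra hcon
    push Not at hcon
    have h4 : ∑ a, - phi y (h a) < ∑ a : Fin k, phi y x / r :=
      Finset.sum_lt_sum_of_nonempty ⟨⟨0, hk0⟩, by simp⟩ fun a _ => hcon a
    rw [← e2] at h4
    simp only [Finset.sum_const, Finset.card_univ, Fintype.card_fin, nsmul_eq_mul] at h4
    have h5 : (k : ℝ) * (phi y x / r) ≤ r * (phi y x / r) :=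
      mul_le_mul_of_nonneg_right hkR (by positivity)
    have h6 : (r : ℝ) * (phi y x / r) = phi y x := by field_simp
    linarith
  obtain ⟨a, ha⟩ := hbig
  have hg := h1 a
  have hc := h2 a
  generalize h a = g at ha hg hc
  obtain ⟨hgpos, hgle⟩ := elem_phi hy hx.2 hg hc
  have hκ := imb_one hg
  have hneg : ∃ i, 0 < - g i := by
    by_contra hcon
    push Not at hcon
    have : 0 ≤ phi y g := phi_nonneg y g fun i => by simpa using hcon i
    linarith
  obtain ⟨l, hl0, hl, i, hgi, hli⟩ := exists_ratio x (fun i => - g i) hx.2 hneg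
  have hl1 : 1 ≤ l := by
    obtain ⟨c, hc0, hc1, hc2⟩ := hc i
    have hyi : 0 ≤ y i := hy.1.2 i
    have hxi : 0 ≤ x i := hx.2 i
    have : - g i ≤ x i := by
      rw [hc2, Pi.sub_apply]
      nlinarith [mul_nonneg hc0 hyi]
    rw [← hli] at this
    by_contra hlt
    push Not at hlt
    nlinarith
  have hx'0 : 0 ≤ x + l • g := by
    intro j
    have := hl j
    simp only [Pi.zero_apply, Pi.add_apply, Pi.smul_apply, smul_eq_mul]
    linarith
  have hphi' : phi y (x + l • g) = phi y x + l * phi y g := by simp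
  have hφ'0 := phi_nonneg y _ hx'0
  have hlr : l ≤ r := by
    by_contra hlt
    push Not at hlt
    have h7 : phi y x / r * r = phi y x := by field_simp
    have h8 : 0 < phi y x / r := by positivity
    nlinarith
  have hx'i : (x + l • g) i = 0 := by
    simp only [Pi.add_apply, Pi.smul_apply, smul_eq_mul]
    linarith
  have hxi : 0 < x i := by
    rw [← hli]
    exact mul_pos (by linarith) hgi
  refine ⟨x + l • g, ⟨?_, hx'0⟩, ?_, ⟨l • g, elem_smul hg (by linarith), rfl, ?_⟩, hr1, hphi,
    ?_, ?_, i, hx'i, hxi, ?_⟩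
  · rw [Matrix.mulVec_add, Matrix.mulVec_smul, hg.1, hx.1]; simp
  · intro j hj hj'
    obtain ⟨c, hc0, hc1, hc2⟩ := hc j
    simp [hc2, hj', hU j hj hj']
  · rintro ε hε ⟨_, hP⟩
    have := hP i
    simp only [Pi.zero_apply, Pi.add_apply, Pi.smul_apply, smul_eq_mul] at this hx'i
    have h9 : 0 < ε * (l * (- g i)) := mul_pos hε (mul_pos (by linarith) hgi)
    nlinarith
  · rw [hphi']
    have : (1 - 1 / (r : ℝ)) * phi y x = phi y x - phi y x / r := by ring
    rw [this]
    nlinarith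
  · intro j hj
    obtain ⟨c, hc0, hc1, hc2⟩ := hc j
    have hyj : 0 ≤ y j := hy.1.2 j
    have hxj : 0 ≤ x j := hx.2 j
    simp only [Pi.add_apply, Pi.smul_apply, smul_eq_mul]
    rw [hc2, Pi.sub_apply]
    have hlc : 0 ≤ l * c := mul_nonneg hl0 hc0
    have hlc2 : l * c ≤ r := by nlinarith
    rcases le_total (y j) (x j) with hle | hle
    · nlinarith [mul_nonneg hlc (sub_nonneg.mpr hle)]
    · nlinarith [mul_le_mul_of_nonneg_right hlc2 (sub_nonneg.mpr hle),
        mul_nonneg (sub_nonneg.mpr hrR) hxj]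
  · intro hxr
    have hgj : ∀ j, - g j ≤ circImb A * (- g i) := by
      intro j
      have := imb_le hg (i := i) (by linarith) j
      rw [abs_of_neg (by linarith : g i < 0)] at this
      exact (neg_le_abs _).trans this
    have hsum : - phi y g ≤ (2 * m) * (circImb A * (- g i)) := by
      rw [phi_apply, ← Finset.sum_neg_distrib]
      have hsub : ∑ j ∈ Finset.univ.filter (fun j => y j = 0), - g j =
          ∑ j ∈ (Finset.univ.filter (fun j => y j = 0)).filter (fun j => x0 j ≠ 0), - g j := by
        refine (Finset.sum_filter_of_ne ?_).symm
        intro j hj hgj0 hx0j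
        apply hgj0
        have hyj := (Finset.mem_filter.mp hj).2
        obtain ⟨c, hc0, hc1, hc2⟩ := hc j
        simp [hc2, hyj, hU j hx0j hyj]
      rw [hsub]
      refine (Finset.sum_le_card_nsmul _ _ _ fun j _ => hgj j).trans ?_
      rw [nsmul_eq_mul]
      refine mul_le_mul_of_nonneg_right ?_ (mul_nonneg (by linarith) hgi.le)
      have hc1 : ((Finset.univ.filter (fun j => y j = 0)).filter (fun j => x0 j ≠ 0)).card ≤ m := by
        refine (Finset.card_le_card ?_).trans (card_supp_le hx0)
        intro j hj
        simp only [Finset.mem_filter, Finset.mem_univ, true_and] at hj ⊢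
        exact hj.2
      have hc2 : (((Finset.univ.filter (fun j => y j = 0)).filter
        (fun j => x0 j ≠ 0)).card : ℝ) ≤ m := by exact_mod_cast hc1
      have : (0 : ℝ) ≤ m := by positivity
      linarith
    have h7 : phi y x ≤ r * (- phi y g) := by
      rw [div_le_iff₀ (by linarith)] at ha
      linarith
    have h8 : - phi y g ≤ l * (- phi y g) := by nlinarith
    have h9 : l * (- phi y g) ≤ (2 * m) * circImb A * x i := by
      calc l * (- phi y g) ≤ l * ((2 * m) * (circImb A * (- g i))) :=
            mul_le_mul_of_nonneg_left hsum hl0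
        _ = (2 * m) * circImb A * (l * - g i) := by ring
        _ = _ := by rw [hli]
    have h10 : (2 * m) * circImb A * x i ≤ (2 * m) * circImb A * (r * y i) :=
      mul_le_mul_of_nonneg_left hxr (by positivity)
    calc phi y x ≤ r * (- phi y g) := h7
      _ ≤ r * ((2 * m) * circImb A * (r * y i)) :=
          mul_le_mul_of_nonneg_left (by linarith) (by linarith)
      _ = _ := by ring

lemma count_bound {m n : ℕ} (x0 y : Fin n → ℝ) (f : ℕ → Fin n → ℝ) (p : ℕ → ℝ) (r : ℕ) (κ : ℝ)
    (T : ℕ) (hr : 1 ≤ r) (hm : 1 ≤ m) (hκ : 1 ≤ κ)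
    (cx : (Finset.univ.filter fun i => x0 i ≠ 0).card ≤ m)
    (cy : (Finset.univ.filter fun i => y i ≠ 0).card ≤ m)
    (hU : ∀ t i, x0 i = 0 → y i = 0 → f t i = 0)
    (hdist : ∀ t i, |y i - f t i| ≤ κ * p t)
    (hp : ∀ t < T, 0 < p t)
    (hdec : ∀ t < T, p (t + 1) ≤ (1 - 1 / (r : ℝ)) * p t)
    (hR : ∀ t < T, ∀ i, f t i ≤ r * y i → f (t + 1) i ≤ r * y i)
    (hy : ∀ i, 0 ≤ y i)
    (idx : ℕ → Fin n)
    (hidx : ∀ t < T, f (t + 1) (idx t) = 0 ∧ 0 < f t (idx t) ∧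
      (f t (idx t) ≤ r * y (idx t) → p t ≤ (r : ℝ) ^ 2 * (2 * m) * κ * y (idx t))) :
    (T : ℝ) ≤ 3 * m + m * (r * Real.log (2 * m * (r : ℝ) ^ 2 * κ ^ 2)) := by
  have hrR : (1 : ℝ) ≤ r := by exact_mod_cast hr
  have hmR : (1 : ℝ) ≤ m := by exact_mod_cast hm
  have hRm : ∀ i t s, t + s ≤ T → f t i ≤ r * y i → f (t + s) i ≤ r * y i := by
    intro i t s
    induction s with
    | zero => intro _ h; exact h
    | succ s ih =>
      intro hT h
      exact hR (t + s) (by omega) i (ih (by omega) h)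
  have hpm : ∀ t s, t + s < T → p (t + s) ≤ Real.exp (-(s / r : ℝ)) * p t := by
    intro t s
    induction s with
    | zero => intro _; simp
    | succ s ih =>
      intro hT
      have h1 := ih (by omega)
      have h2 := hdec (t + s) (by omega)
      have h3 := Real.one_sub_le_exp_neg (1 / (r : ℝ))
      have h4 := hp (t + s) (by omega)
      calc p (t + (s + 1)) ≤ (1 - 1 / (r : ℝ)) * p (t + s) := h2
        _ ≤ Real.exp (-(1 / r)) * p (t + s) := mul_le_mul_of_nonneg_right h3 h4.le
        _ ≤ Real.exp (-(1 / r)) * (Real.exp (-(s / r : ℝ)) * p t) :=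
            mul_le_mul_of_nonneg_left h1 (Real.exp_pos _).le
        _ = _ := by
            rw [← mul_assoc, ← Real.exp_add]
            congr 2
            push_cast
            ring
  set M : ℝ := 2 * m * (r : ℝ) ^ 2 * κ ^ 2 with hM
  have hM1 : 1 ≤ M := by
    have h1 : (1 : ℝ) ≤ r ^ 2 := one_le_pow₀ hrR
    have h2 : (1 : ℝ) ≤ κ ^ 2 := one_le_pow₀ hκ
    have h3 : (1 : ℝ) ≤ 2 * m := by linarith
    exact one_le_mul_of_one_le_of_one_le (one_le_mul_of_one_le_of_one_le h3 h1) h2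
  have hL0 : 0 ≤ Real.log M := Real.log_nonneg hM1
  have hwin : ∀ t s, t + s < T → idx (t + s) = idx t → f t (idx t) ≤ r * y (idx t) →
      (s : ℝ) ≤ r * Real.log M := by
    intro t s hT hi hf
    obtain ⟨a1, a2, a3⟩ := hidx t (by omega)
    obtain ⟨b1, b2, b3⟩ := hidx (t + s) hT
    have c1 := a3 hf
    have hyp : 0 < y (idx t) := by
      have : 0 < (r : ℝ) * y (idx t) := by linarith
      exact pos_of_mul_pos_right this (by linarith)
    have d1 := hdist (t + s + 1) (idx t)
    rw [hi] at b1
    rw [b1, sub_zero, abs_of_pos hyp] at d1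
    have d2 : p (t + s + 1) ≤ p (t + s) := by
      have e1 := hdec (t + s) hT
      have e2 := hp (t + s) hT
      have e3 : 0 ≤ 1 / (r : ℝ) := by positivity
      nlinarith
    have d3 := hpm t s hT
    have d4 : y (idx t) ≤ κ * (Real.exp (-(s / r : ℝ)) *
        ((r : ℝ) ^ 2 * (2 * m) * κ * y (idx t))) := by
      refine d1.trans (mul_le_mul_of_nonneg_left (d2.trans (d3.trans ?_)) (by linarith))
      exact mul_le_mul_of_nonneg_left c1 (Real.exp_pos _).le
    have d5 : y (idx t) * 1 ≤ y (idx t) * (Real.exp (-(s / r : ℝ)) * M) := by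
      rw [hM]
      linarith
    have d6 := le_of_mul_le_mul_left d5 hyp
    rw [Real.exp_neg, ← div_eq_inv_mul, le_div_iff₀ (Real.exp_pos _), one_mul] at d6
    have d7 := (Real.le_log_iff_exp_le (by linarith)).mpr d6
    rw [div_le_iff₀ (by linarith)] at d7
    linarith
  -- counting
  let s1 := (Finset.range T).filter fun t => ¬ (f t (idx t) ≤ r * y (idx t))
  let s2 := (Finset.range T).filter fun t => f t (idx t) ≤ r * y (idx t)
  have hcard : s2.card + s1.card = T := by
    have := Finset.card_filter_add_card_filter_not (s := Finset.range T)
      (fun t => f t (idx t) ≤ r * y (idx t))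
    simpa [s1, s2] using this
  have hs1 : s1.card ≤ 2 * m := by
    have : s1.card ≤ ((Finset.univ.filter fun i => x0 i ≠ 0) ∪
        (Finset.univ.filter fun i => y i ≠ 0)).card := by
      refine Finset.card_le_card_of_injOn idx ?_ ?_
      · intro t ht
        have ht' : t < T := by
          have := (Finset.mem_filter.mp ht).1
          simpa using this
        obtain ⟨a1, a2, a3⟩ := hidx t ht'
        by_contra hcon
        have hcon' : x0 (idx t) = 0 ∧ y (idx t) = 0 := by
          simpa [not_or] using hcon
        have := hU t _ hcon'.1 hcon'.2
        linarith
      · have key : ∀ t ∈ s1, ∀ t' ∈ s1, t < t' → idx t ≠ idx t' := by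
          intro t ht t' ht' hlt heq
          obtain ⟨u1, u2⟩ := Finset.mem_filter.mp ht
          obtain ⟨v1, v2⟩ := Finset.mem_filter.mp ht'
          rw [Finset.mem_range] at u1 v1
          obtain ⟨a1, a2, a3⟩ := hidx t u1
          apply v2
          rw [← heq]
          have h5 := hRm (idx t) (t + 1) (t' - (t + 1)) (by omega) (by
            rw [a1]; exact mul_nonneg (by linarith) (hy _))
          rwa [show t + 1 + (t' - (t + 1)) = t' by omega] at h5
        intro t ht t' ht' heq
        rcases lt_trichotomy t t' with h | h | h
        · exact absurd heq (key t ht t' ht' h)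
        · exact h
        · exact absurd heq.symm (key t' ht' t ht h)
    have h2 := Finset.card_union_le (Finset.univ.filter fun i => x0 i ≠ 0)
      (Finset.univ.filter fun i => y i ≠ 0)
    omega
  have hs2 : s2.card ≤ (⌊r * Real.log M⌋₊ + 1) * m := by
    have h1 : s2.card ≤ (⌊r * Real.log M⌋₊ + 1) * (s2.image idx).card := by
      refine Finset.card_le_mul_card_image s2 _ ?_
      intro i hi
      rcases (s2.filter fun t => idx t = i).eq_empty_or_nonempty with he | hne
      · rw [he]; simp
      set t0 := (s2.filter fun t => idx t = i).min' hne with ht0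
      have hmem := Finset.min'_mem _ hne
      rw [← ht0] at hmem
      obtain ⟨u1, u2⟩ := Finset.mem_filter.mp hmem
      obtain ⟨u3, u4⟩ := Finset.mem_filter.mp u1
      have hsub : (s2.filter fun t => idx t = i) ⊆ Finset.Icc t0 (t0 + ⌊r * Real.log M⌋₊) := by
        intro t ht
        have hle : t0 ≤ t := Finset.min'_le _ _ ht
        obtain ⟨v1, v2⟩ := Finset.mem_filter.mp ht
        obtain ⟨v3, v4⟩ := Finset.mem_filter.mp v1
        rw [Finset.mem_range] at v3
        have h6 := hwin t0 (t - t0) (by omega)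
          (by rw [show t0 + (t - t0) = t by omega, v2, u2]) u4
        have h7 := Nat.le_floor h6
        rw [Finset.mem_Icc]
        omega
      have := Finset.card_le_card hsub
      rw [Nat.card_Icc] at this
      omega
    refine h1.trans (Nat.mul_le_mul_left _ ?_)
    refine (Finset.card_le_card ?_).trans cy
    intro i hi
    obtain ⟨t, ht, rfl⟩ := Finset.mem_image.mp hi
    obtain ⟨u1, u2⟩ := Finset.mem_filter.mp ht
    rw [Finset.mem_range] at u1
    obtain ⟨a1, a2, a3⟩ := hidx t u1
    simp only [Finset.mem_filter, Finset.mem_univ, true_and]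
    intro h0
    rw [h0] at u2
    linarith
  have hfl : (⌊r * Real.log M⌋₊ : ℝ) ≤ r * Real.log M := Nat.floor_le (by positivity)
  have hT : (T : ℝ) ≤ (⌊r * Real.log M⌋₊ + 1) * m + 2 * m := by
    have : T ≤ (⌊r * Real.log M⌋₊ + 1) * m + 2 * m := by omega
    exact_mod_cast this
  have := mul_le_mul_of_nonneg_right hfl (by linarith : (0 : ℝ) ≤ m)
  linarith

lemma final_arith (m r : ℕ) (κ : ℝ) (hr : 1 ≤ r) (hrm : r ≤ m) (hκ : 1 ≤ κ) :
    3 * (m : ℝ) + m * (r * Real.log (2 * m * (r : ℝ) ^ 2 * κ ^ 2)) ≤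
      12 * m * r * Real.log (m + κ) := by
  have hrR : (1 : ℝ) ≤ r := by exact_mod_cast hr
  have hrmR : (r : ℝ) ≤ m := by exact_mod_cast hrm
  set s : ℝ := m + κ with hs
  have h2 : 2 ≤ s := by linarith
  have hm0 : (0 : ℝ) < m := by linarith
  have hr0 : (0 : ℝ) < r := by linarith
  have hlog2 : (1 / 2 : ℝ) ≤ Real.log s := by
    have h3 := Real.log_two_gt_d9
    have h4 := Real.log_le_log (by norm_num) h2
    linarith
  have hle : 2 * m * (r : ℝ) ^ 2 * κ ^ 2 ≤ s ^ 6 := by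
    calc 2 * m * (r : ℝ) ^ 2 * κ ^ 2 ≤ s * s * s ^ 2 * s ^ 2 := by
          gcongr <;> linarith
      _ = s ^ 6 := by ring
  have hL : Real.log (2 * m * (r : ℝ) ^ 2 * κ ^ 2) ≤ 6 * Real.log s := by
    have h5 := Real.log_le_log (by positivity) hle
    rw [Real.log_pow] at h5
    exact_mod_cast h5
  have h6 : (m : ℝ) * (r * Real.log (2 * m * (r : ℝ) ^ 2 * κ ^ 2)) ≤ m * (r * (6 * Real.log s)) := by
    gcongr
  have h7 : (1 / 2 : ℝ) ≤ r * Real.log s := by nlinarith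
  have h8 : (m : ℝ) * (1 / 2) ≤ m * (r * Real.log s) := by gcongr
  linarith

theorem circuit_diameter_bound :
    ∃ C : ℝ, 0 < C ∧
      ∀ (m n : ℕ) (A : Matrix (Fin m) (Fin n) ℝ) (b : Fin m → ℝ),
        A.rank = m →
        ∀ x y : Fin n → ℝ,
          x ∈ Set.extremePoints ℝ {z : Fin n → ℝ | A.mulVec z = b ∧ 0 ≤ z} →
          y ∈ Set.extremePoints ℝ {z : Fin n → ℝ | A.mulVec z = b ∧ 0 ≤ z} →
          ∃ (k : ℕ) (w : Fin (k + 1) → Fin n → ℝ),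
            IsCircuitWalk A {z : Fin n → ℝ | A.mulVec z = b ∧ 0 ≤ z} w ∧
            w 0 = x ∧ w (Fin.last k) = y ∧
            (k : ℝ) ≤ C * (m : ℝ) * ((min m (n - m) : ℕ) : ℝ) *
              Real.log ((m : ℝ) + circImb A) := by
  refine ⟨12, by norm_num, ?_⟩
  intro m n A b hA x y hx hy
  have hstep : ∀ u : {u : Fin n → ℝ // (A.mulVec u = b ∧ 0 ≤ u) ∧
      ∀ i, x i = 0 → y i = 0 → u i = 0}, ∃ v : {u : Fin n → ℝ // (A.mulVec u = b ∧ 0 ≤ u) ∧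
      ∀ i, x i = 0 → y i = 0 → u i = 0}, u.1 ≠ y →
      (∃ g ∈ elemVecs A, v.1 = u.1 + g ∧
        ∀ ε : ℝ, 0 < ε → u.1 + (1 + ε) • g ∉ {z : Fin n → ℝ | A.mulVec z = b ∧ 0 ≤ z}) ∧
      1 ≤ min m (n - m) ∧ 0 < phi y u.1 ∧
      phi y v.1 ≤ (1 - 1 / ((min m (n - m) : ℕ) : ℝ)) * phi y u.1 ∧
      (∀ i, u.1 i ≤ ((min m (n - m) : ℕ) : ℝ) * y i → v.1 i ≤ ((min m (n - m) : ℕ) : ℝ) * y i) ∧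
      ∃ i, v.1 i = 0 ∧ 0 < u.1 i ∧ (u.1 i ≤ ((min m (n - m) : ℕ) : ℝ) * y i →
        phi y u.1 ≤ ((min m (n - m) : ℕ) : ℝ) ^ 2 * (2 * m) * circImb A * y i) := by
    rintro ⟨u, hu, hu2⟩
    by_cases huy : u = y
    · exact ⟨⟨u, hu, hu2⟩, fun h => absurd huy h⟩
    · obtain ⟨v, hv, hv2, hv3⟩ := step_exists hA hx hy hu hu2 huy
      exact ⟨⟨v, hv, hv2⟩, fun _ => hv3⟩
  choose F hF using hstep
  let f := fun t : ℕ => F^[t] ⟨x, hx.1, fun i h _ => h⟩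
  have hf0 : (f 0).1 = x := rfl
  have hfs : ∀ t, f (t + 1) = F (f t) := fun t => Function.iterate_succ_apply' F t _
  have hcount : ∀ T, 1 ≤ T → (∀ t < T, (f t).1 ≠ y) →
      (T : ℝ) ≤ 12 * m * ((min m (n - m) : ℕ) : ℝ) * Real.log (m + circImb A) := by
    intro T hT1 hT
    have hst : ∀ t < T, _ := fun t ht => hF (f t) (hT t ht)
    obtain ⟨⟨g, hg, _⟩, hr1, _, _, _, i0, _⟩ := hst 0 (by omega)
    have hidx : ∀ t, ∃ i, t < T → ((f (t + 1)).1 i = 0 ∧ 0 < (f t).1 i ∧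
        ((f t).1 i ≤ ((min m (n - m) : ℕ) : ℝ) * y i →
        phi y (f t).1 ≤ ((min m (n - m) : ℕ) : ℝ) ^ 2 * (2 * m) * circImb A * y i)) := by
      intro t
      by_cases ht : t < T
      · obtain ⟨_, _, _, _, _, i, hi⟩ := hst t ht
        exact ⟨i, fun _ => by rw [hfs]; exact hi⟩
      · exact ⟨i0, fun h => absurd h ht⟩
    choose idx hidx using hidx
    refine le_trans ?_ (final_arith m (min m (n - m)) (circImb A) hr1 (min_le_left _ _) (imb_one hg))
    refine count_bound x y (fun t => (f t).1) (fun t => phi y (f t).1) (min m (n - m)) (circImb A) T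
      hr1 (hr1.trans (min_le_left _ _)) (imb_one hg) (card_supp_le hx) (card_supp_le hy)
      (fun t => (f t).2.2) (fun t i => dist_le hA hx hy (f t).2.1 (f t).2.2 i)
      (fun t ht => (hst t ht).2.2.1) (fun t ht => ?_) (fun t ht => ?_) (fun i => hy.1.2 i)
      idx hidx
    · simp only [hfs]
      exact (hst t ht).2.2.2.1
    · simp only [hfs]
      exact (hst t ht).2.2.2.2.1
  have hex : ∃ t, (f t).1 = y := by
    by_contra hcon
    push Not at hcon
    obtain ⟨N, hN⟩ := exists_nat_gt
      (12 * m * ((min m (n - m) : ℕ) : ℝ) * Real.log (m + circImb A))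
    have h1 := hcount (N + 1) (by omega) fun t _ => hcon t
    rw [Nat.cast_add, Nat.cast_one] at h1
    linarith
  have hmin : ∀ t < Nat.find hex, (f t).1 ≠ y := fun t ht => Nat.find_min hex ht
  have hend := Nat.find_spec hex
  generalize Nat.find hex = T at hmin hend
  refine ⟨T, fun i => (f i).1, ⟨fun i => (f i).2.1, fun i => ?_⟩, hf0, by simpa using hend, ?_⟩
  · obtain ⟨⟨g, hg, h1, h2⟩, _⟩ := hF (f i) (hmin i i.2)
    refine ⟨g, hg, ?_, h2⟩
    simp only [Fin.val_succ, Fin.val_castSucc, hfs]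
    exact h1
  · rcases Nat.eq_zero_or_pos T with h0 | h0
    · subst h0
      rw [Nat.cast_zero]
      by_cases hm0 : m = 0
      · subst hm0; simp
      · refine mul_nonneg (by positivity) ?_
        have hm1 : (1 : ℝ) ≤ m := by exact_mod_cast Nat.one_le_iff_ne_zero.mpr hm0
        have hk0 : 0 ≤ circImb A := by
          apply Real.sSup_nonneg
          rintro r ⟨g, _, i, j, _, _, rfl⟩
          positivity
        exact Real.log_nonneg (by linarith)
    · exact hcount T h0 hmin
end
end

section
/- Let W ⊆ ℝⁿ be a linear subspace with W ≠ {0} and W^⊥ ≠ {0}. Then κ_W = κ_{W^⊥}, i.e., the circuit imbalance measure of W equals that of its orthogonal complement. -/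
open scoped BigOperators

noncomputable section
open Classical

/-- Elementary vectors of a linear subspace `W ⊆ ℝⁿ`: support-minimal nonzero vectors of `W`. -/
def elemVecsE {n : ℕ} (W : Submodule ℝ (EuclideanSpace ℝ (Fin n))) :
    Set (EuclideanSpace ℝ (Fin n)) :=
  {g | g ∈ W ∧ g ≠ 0 ∧
    ∀ h, h ∈ W → h ≠ 0 → ¬ ({i | h i ≠ 0} ⊂ {i | g i ≠ 0})}

/-- The circuit imbalance measure `κ_W` of a subspace. -/
def circImbE {n : ℕ} (W : Submodule ℝ (EuclideanSpace ℝ (Fin n))) : ℝ :=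
  sSup {r : ℝ | ∃ g ∈ elemVecsE W, ∃ i j, g i ≠ 0 ∧ g j ≠ 0 ∧ r = |g j| / |g i|}

theorem exists_min_supp {n : ℕ} (P : EuclideanSpace ℝ (Fin n) → Prop) (hP : ∃ h, P h) :
    ∃ h, P h ∧ ∀ h', P h' → ¬ ({i | h' i ≠ 0} ⊂ {i | h i ≠ 0}) := by
  obtain ⟨m, hm, hmin⟩ := (InvImage.wf (fun h : EuclideanSpace ℝ (Fin n) => {i | h i ≠ 0})
    (wellFounded_lt : WellFounded ((· < ·) : Set (Fin n) → Set (Fin n) → Prop))).has_min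
    {h | P h} hP
  exact ⟨m, hm, fun h' hh' hlt => hmin h' hh' hlt⟩

theorem exists_elem {n : ℕ} (W : Submodule ℝ (EuclideanSpace ℝ (Fin n))) (hW : W ≠ ⊥) :
    ∃ g, g ∈ elemVecsE W := by
  obtain ⟨x, hx, hx0⟩ := W.exists_mem_ne_zero_of_ne_bot hW
  obtain ⟨h, ⟨h1, h2⟩, h3⟩ := exists_min_supp (fun h => h ∈ W ∧ h ≠ 0) ⟨x, hx, hx0⟩
  exact ⟨h, h1, h2, fun h' a b => h3 h' ⟨a, b⟩⟩

theorem exists_coord {n : ℕ} (g : EuclideanSpace ℝ (Fin n)) (hg : g ≠ 0) : ∃ i, g i ≠ 0 := by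
  by_contra! hc
  exact hg (by ext i; simpa using hc i)

theorem exists_dual {n : ℕ} (W : Submodule ℝ (EuclideanSpace ℝ (Fin n)))
    (g : EuclideanSpace ℝ (Fin n)) (hg : g ∈ elemVecsE W) (i j : Fin n) (hij : i ≠ j)
    (hj : g j ≠ 0) (hi : g i ≠ 0) :
    ∃ h ∈ Wᗮ, (∀ k, g k ≠ 0 → k ≠ i → k ≠ j → h k = 0) ∧ h i ≠ 0 := by
  by_contra! hc
  let S : Submodule ℝ (EuclideanSpace ℝ (Fin n)) :=
    { carrier := {v | ∀ k, ¬ (g k ≠ 0 ∧ k ≠ i ∧ k ≠ j) → v k = 0}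
      zero_mem' := by intro k _; simp
      add_mem' := by
        intro a b ha hb k hk
        simp [ha k hk, hb k hk]
      smul_mem' := by
        intro c a ha k hk
        simp [ha k hk] }
  have hmem : EuclideanSpace.single i (1:ℝ) ∈ W ⊔ S := by
    rw [← Submodule.orthogonal_orthogonal (W ⊔ S), Submodule.mem_orthogonal]
    intro u hu
    rw [← Submodule.inf_orthogonal] at hu
    have hu0 : u i = 0 := by
      apply hc u hu.1
      intro k h1 h2 h3
      have hk : EuclideanSpace.single k (1:ℝ) ∈ S := by
        intro l hl
        have : l ≠ k := by rintro rfl; exact hl ⟨h1, h2, h3⟩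
        simp [this]
      have := (Submodule.mem_orthogonal S u).1 hu.2 _ hk
      simpa [EuclideanSpace.inner_single_left] using this
    simp [EuclideanSpace.inner_single_right, hu0]
  obtain ⟨w, hw, s, hs, hws⟩ := Submodule.mem_sup.1 hmem
  have e : ∀ k, w k + s k = (EuclideanSpace.single i (1:ℝ)) k := fun k => by
    rw [← hws]; simp
  have hwi : w i = 1 := by
    have h1 := e i
    have h2 : s i = 0 := hs i (by simp)
    simpa [h2] using h1
  have hout : ∀ k, k ≠ i → ¬ (g k ≠ 0 ∧ k ≠ i ∧ k ≠ j) → w k = 0 := by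
    intro k hki hk
    have h1 := e k
    have h2 : s k = 0 := hs k hk
    simpa [h2, hki] using h1
  refine hg.2.2 w hw (by rintro rfl; simp at hwi) ?_
  rw [Set.ssubset_iff_of_subset]
  · exact ⟨j, hj, fun h => h (hout j hij.symm (by simp))⟩
  · intro k hk
    by_cases hki : k = i
    · subst hki; exact hi
    · by_contra hgk
      exact hk (hout k hki (fun h => hgk h.1))

theorem exists_dual_elem {n : ℕ} (W : Submodule ℝ (EuclideanSpace ℝ (Fin n)))
    (g : EuclideanSpace ℝ (Fin n)) (hg : g ∈ elemVecsE W) (i j : Fin n) (hij : i ≠ j)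
    (hj : g j ≠ 0) (hi : g i ≠ 0) :
    ∃ h ∈ elemVecsE Wᗮ, h i ≠ 0 ∧ h j ≠ 0 ∧ |g j| / |g i| = |h i| / |h j| := by
  obtain ⟨h, ⟨hW, hz, hhi⟩, hmin⟩ := exists_min_supp
    (fun h => h ∈ Wᗮ ∧ (∀ k, g k ≠ 0 → k ≠ i → k ≠ j → h k = 0) ∧ h i ≠ 0)
    (by obtain ⟨h, a, b⟩ := exists_dual W g hg i j hij hj hi; exact ⟨h, a, b⟩)
  have hsum : g i * h i + g j * h j = 0 := by
    have h0 := (Submodule.mem_orthogonal W h).1 hW g hg.1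
    rw [PiLp.inner_apply] at h0
    rw [← Finset.sum_subset (Finset.subset_univ {i, j}), Finset.sum_pair hij] at h0
    · simp at h0; linarith
    · intro k _ hk
      simp only [Finset.mem_insert, Finset.mem_singleton, not_or] at hk
      by_cases hgk : g k = 0
      · simp [hgk]
      · simp [hz k hgk hk.1 hk.2]
  have hhj : h j ≠ 0 := by
    intro h0
    rw [h0, mul_zero, add_zero] at hsum
    exact (mul_ne_zero hi hhi) hsum
  refine ⟨h, ⟨hW, by rintro rfl; simp at hhi, ?_⟩, hhi, hhj, ?_⟩
  · intro f hf hf0 hlt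
    have hsub : ∀ k, h k = 0 → f k = 0 := by
      intro k hk
      by_contra hfk
      exact hlt.1 hfk hk
    by_cases hfi : f i = 0
    · obtain ⟨k, hk⟩ := exists_coord f hf0
      refine hmin (h - (h k / f k) • f) ⟨Submodule.sub_mem _ hW (Submodule.smul_mem _ _ hf), ?_, ?_⟩ ?_
      · intro l h1 h2 h3
        have := hz l h1 h2 h3
        simp [this, hsub l this]
      · simpa [hfi] using hhi
      · rw [Set.ssubset_iff_of_subset]
        · exact ⟨k, hlt.1 hk, fun hn => hn (by simp [hk])⟩
        · intro l hl hl0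
          exact hl (by simp [hl0, hsub l hl0])
    · exact hmin f ⟨hf, fun k h1 h2 h3 => hsub k (hz k h1 h2 h3), hfi⟩ hlt
  · rw [div_eq_div_iff (abs_ne_zero.2 hi) (abs_ne_zero.2 hhj), ← abs_mul, ← abs_mul]
    have : g j * h j = -(h i * g i) := by linarith
    rw [this, abs_neg]

theorem ratio_subset {n : ℕ} (W : Submodule ℝ (EuclideanSpace ℝ (Fin n))) (hWp : Wᗮ ≠ ⊥) :
    {r : ℝ | ∃ g ∈ elemVecsE W, ∃ i j, g i ≠ 0 ∧ g j ≠ 0 ∧ r = |g j| / |g i|} ⊆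
    {r : ℝ | ∃ g ∈ elemVecsE Wᗮ, ∃ i j, g i ≠ 0 ∧ g j ≠ 0 ∧ r = |g j| / |g i|} := by
  rintro r ⟨g, hg, i, j, hi, hj, rfl⟩
  by_cases hij : i = j
  · subst hij
    obtain ⟨h, hh⟩ := exists_elem _ hWp
    obtain ⟨k, hk⟩ := exists_coord h hh.2.1
    exact ⟨h, hh, k, k, hk, hk, by
      rw [div_self (abs_ne_zero.2 hi), div_self (abs_ne_zero.2 hk)]⟩
  · obtain ⟨h, hh, h1, h2, h3⟩ := exists_dual_elem W g hg i j hij hj hi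
    exact ⟨h, hh, j, i, h2, h1, h3⟩

theorem circuit_imbalance_duality {n : ℕ} (W : Submodule ℝ (EuclideanSpace ℝ (Fin n)))
    (hW : W ≠ ⊥) (hWp : Wᗮ ≠ ⊥) :
    circImbE W = circImbE Wᗮ := by
  unfold circImbE
  congr 1
  apply Set.Subset.antisymm (ratio_subset W hWp)
  have := ratio_subset Wᗮ (by rwa [Submodule.orthogonal_orthogonal])
  rwa [Submodule.orthogonal_orthogonal] at this
end
end

section
/- Let A ∈ ℝ^{m×n}, b ∈ ℝ^m, c ∈ ℝⁿ, P = {x ∈ ℝⁿ : Ax = b, x ≥ 0}, and let OPT = min{⟨c, z⟩ : z ∈ P} be finite. Let x ∈ P, and let g minimize ⟨c, z⟩ over the set F = {z ∈ ker(A) : Σ_{i ∈ supp(x)} z_i⁻ / x_i ≤ 1 and z_i ≥ 0 for all i ∉ supp(x)} (assume this minimum is attained at g). Then x + g ∈ P (so the maximal stepsize α in aug_P(x, g) satisfies α ≥ 1), and for x' = aug_P(x, g) it holds that ⟨c, x'⟩ − OPT ≤ (1 − 1/|supp(x)|) · (⟨c, x⟩ − OPT). -/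
open Matrix
open scoped BigOperators

noncomputable section
open Classical

/-- Progress of the minimum-ratio circuit rule (Wallacher's rule): the returned direction `g`
admits stepsize `α ≥ 1`, and a maximal augmentation decreases the optimality gap by a factor
`(1 - 1/|supp x|)`. -/
theorem ratio_circuit_progress {m n : ℕ} (A : Matrix (Fin m) (Fin n) ℝ) (b : Fin m → ℝ)
    (c : Fin n → ℝ) (OPT : ℝ)
    (P : Set (Fin n → ℝ)) (hP : P = {z : Fin n → ℝ | A.mulVec z = b ∧ 0 ≤ z})
    (hOPT : IsLeast {r : ℝ | ∃ z ∈ P, r = c ⬝ᵥ z} OPT)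
    (x : Fin n → ℝ) (hx : x ∈ P)
    (F : Set (Fin n → ℝ))
    (hF : F = {z : Fin n → ℝ | A.mulVec z = 0 ∧
      (∑ i ∈ Finset.univ.filter (fun i => x i ≠ 0), max 0 (-(z i)) / x i) ≤ 1 ∧
      ∀ i, x i = 0 → 0 ≤ z i})
    (g : Fin n → ℝ) (hgF : g ∈ F) (hgmin : ∀ z ∈ F, c ⬝ᵥ g ≤ c ⬝ᵥ z)
    (α : ℝ) (hα : IsGreatest {a : ℝ | 0 ≤ a ∧ x + a • g ∈ P} α)
    (x' : Fin n → ℝ) (hx' : x' = x + α • g) :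
    x + g ∈ P ∧ 1 ≤ α ∧
      c ⬝ᵥ x' - OPT ≤ (1 - 1 / (Set.ncard {i | x i ≠ 0} : ℝ)) * (c ⬝ᵥ x - OPT) := by
  subst hP hF
  obtain ⟨hxA, hx0⟩ := hx
  obtain ⟨hgA, hgs, hgz⟩ := hgF
  obtain ⟨⟨z, ⟨hzA, hz0⟩, hzO⟩, -⟩ := hOPT
  have hxg : A.mulVec (x + g) = b ∧ 0 ≤ x + g := by
    refine ⟨by rw [Matrix.mulVec_add, hxA, hgA, add_zero], fun i => ?_⟩
    have hxi : 0 ≤ x i := hx0 i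
    show 0 ≤ x i + g i
    by_cases h : x i = 0
    · have := hgz i h
      linarith
    · have hpos : 0 < x i := lt_of_le_of_ne hxi (Ne.symm h)
      have h1 : max 0 (-(g i)) / x i ≤ 1 := by
        refine le_trans ?_ hgs
        refine Finset.single_le_sum (f := fun i => max 0 (-(g i)) / x i)
          (fun j _ => div_nonneg (le_max_left _ _) (hx0 j)) ?_
        simp [h]
      rw [div_le_one hpos] at h1
      have := le_max_right 0 (-(g i))
      linarith
  have hα1 : 1 ≤ α := hα.2 ⟨zero_le_one, by rw [one_smul]; exact hxg⟩
  refine ⟨hxg, hα1, ?_⟩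
  have hg0 : c ⬝ᵥ g ≤ 0 := by
    have := hgmin 0 ⟨by simp, by simp, by simp⟩
    simpa using this
  have hN : Set.ncard {i | x i ≠ 0} = (Finset.univ.filter (fun i => x i ≠ 0)).card := by
    rw [← Set.ncard_coe_finset]
    congr 1
    ext i
    simp
  rw [hN]
  set N : ℝ := ((Finset.univ.filter (fun i => x i ≠ 0)).card : ℝ) with hNd
  have ht : (0 : ℝ) ≤ 1 / N := by positivity
  have hmin := hgmin ((1 / N) • (z - x)) ⟨by
      rw [Matrix.mulVec_smul, Matrix.mulVec_sub, hzA, hxA, sub_self, smul_zero], by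
      have hb : ∀ i ∈ Finset.univ.filter (fun i => x i ≠ 0),
          max 0 (-(((1 / N) • (z - x)) i)) / x i ≤ 1 / N := by
        intro i hi
        have h : x i ≠ 0 := by simpa using hi
        have hpos : 0 < x i := lt_of_le_of_ne (hx0 i) (Ne.symm h)
        have hzi : 0 ≤ z i := hz0 i
        rw [div_le_iff₀ hpos]
        apply max_le (by positivity)
        show -((1 / N) * (z i - x i)) ≤ 1 / N * x i
        nlinarith [mul_nonneg ht hzi]
      refine (Finset.sum_le_card_nsmul _ _ _ hb).trans ?_
      rw [nsmul_eq_mul, ← hNd, mul_one_div]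
      exact div_self_le_one N, by
      intro i hi
      have hzi : 0 ≤ z i := hz0 i
      show 0 ≤ (1 / N) * (z i - x i)
      rw [hi, sub_zero]
      exact mul_nonneg ht hzi⟩
  rw [dotProduct_smul, dotProduct_sub, ← hzO, smul_eq_mul] at hmin
  rw [hx', dotProduct_add, dotProduct_smul, smul_eq_mul]
  nlinarith [mul_nonneg (sub_nonneg.2 hα1) (neg_nonneg.2 hg0)]
end
end

section
/- Let A ∈ ℝ^{m×n} and c, c' ∈ ℝⁿ with c ∈ ker(A), ‖c‖₂ = 1, and ‖c − c'‖_∞ < 1/(√n · (m+2) · κ_A), where κ_A ≥ 1. Let s' ∈ ℝⁿ be a dual feasible slack for LP(c'), i.e., s' ≥ 0 and s' − c' ∈ Im(Aᵀ). Then there exists an index j ∈ [n] with s'_j > (m+1)/(√n · (m+2)). -/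
open Matrix
open scoped BigOperators

noncomputable section
open Classical

/-- The ℓ∞-norm of a vector in `ℝⁿ`. -/
def normInf {n : ℕ} (v : Fin n → ℝ) : ℝ :=
  sSup (Set.range fun i => |v i|)

/-- If `c ∈ ker(A)` with `‖c‖₂ = 1` and `‖c - c'‖_∞ < 1/(√n (m+2) κ_A)`, then every dual
feasible slack `s'` for `LP(c')` has a coordinate `s'_j > (m+1)/(√n (m+2))`. -/
theorem big_slack {m n : ℕ} (A : Matrix (Fin m) (Fin n) ℝ) (c c' : Fin n → ℝ)
    (hcker : A.mulVec c = 0)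
    (hcnorm : Real.sqrt (∑ i, (c i) ^ 2) = 1)
    (hkappa : 1 ≤ circImb A)
    (hpert : normInf (c - c') < 1 / (Real.sqrt n * ((m : ℝ) + 2) * circImb A))
    (s' : Fin n → ℝ) (hs'nonneg : 0 ≤ s')
    (hs'dual : ∃ y : Fin m → ℝ, s' - c' = A.transpose.mulVec y) :
    ∃ j : Fin n, s' j > ((m : ℝ) + 1) / (Real.sqrt n * ((m : ℝ) + 2)) := by
  obtain ⟨y, hy⟩ := hs'dual
  have hc1 : ∑ i, (c i) ^ 2 = 1 := by
    have := Real.sqrt_eq_one.mp hcnorm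
    exact this
  have hn : 0 < n := by
    rcases Nat.eq_zero_or_pos n with h | h
    · subst h
      simp at hc1
    · exact h
  have hnR : (0 : ℝ) < n := by exact_mod_cast hn
  have hq : 0 < Real.sqrt n := Real.sqrt_pos.mpr hnR
  have hm : (0 : ℝ) < (m : ℝ) + 2 := by positivity
  have hpert2 : normInf (c - c') < 1 / (Real.sqrt n * ((m : ℝ) + 2)) := by
    refine lt_of_lt_of_le hpert ?_
    apply one_div_le_one_div_of_le (by positivity)
    exact le_mul_of_one_le_right (by positivity) hkappa
  have hcoord : ∀ i, |c i - c' i| < 1 / (Real.sqrt n * ((m : ℝ) + 2)) := by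
    intro i
    refine lt_of_le_of_lt ?_ hpert2
    exact le_csSup (Set.finite_range _).bddAbove ⟨i, rfl⟩
  have horth : ∑ i, c i * (s' i - c' i) = 0 := by
    have h : c ⬝ᵥ (s' - c') = 0 := by
      rw [hy, Matrix.mulVec_transpose, dotProduct_comm, ← Matrix.dotProduct_mulVec, hcker,
        dotProduct_zero]
    exact h
  by_contra hcon
  push Not at hcon
  have hsum : ((m : ℝ) + 1) / (Real.sqrt n * ((m : ℝ) + 2)) + 1 / (Real.sqrt n * ((m : ℝ) + 2))
      = 1 / Real.sqrt n := by
    field_simp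
    ring
  have hs : ∀ i, (s' i - c' i + c i) ^ 2 < 1 / n := by
    intro i
    have h0 : 0 ≤ s' i := hs'nonneg i
    have h1 := hcon i
    have h2 := abs_lt.mp (hcoord i)
    have hp : 0 ≤ ((m : ℝ) + 1) / (Real.sqrt n * ((m : ℝ) + 2)) := by positivity
    have h3 : |s' i - c' i + c i| < 1 / Real.sqrt n := by
      rw [abs_lt]
      constructor <;> linarith [h2.1, h2.2]
    have h4 : (1 / Real.sqrt n) ^ 2 = 1 / (n : ℝ) := by
      rw [div_pow, Real.sq_sqrt hnR.le, one_pow]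
    rw [← h4]
    exact sq_lt_sq' (abs_lt.mp h3).1 (abs_lt.mp h3).2
  have hlt : ∑ i, (s' i - c' i + c i) ^ 2 < 1 := by
    calc ∑ i, (s' i - c' i + c i) ^ 2 < ∑ _i : Fin n, 1 / (n : ℝ) :=
          Finset.sum_lt_sum_of_nonempty ⟨⟨0, hn⟩, Finset.mem_univ _⟩ (fun i _ => hs i)
      _ = 1 := by
          simp [hnR.ne']
  have hexp : ∑ i, (s' i - c' i + c i) ^ 2
      = ∑ i, (s' i - c' i) ^ 2 + 2 * ∑ i, c i * (s' i - c' i) + ∑ i, (c i) ^ 2 := by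
    rw [Finset.mul_sum, ← Finset.sum_add_distrib, ← Finset.sum_add_distrib]
    exact Finset.sum_congr rfl fun i _ => by ring
  have hnn : 0 ≤ ∑ i, (s' i - c' i) ^ 2 := Finset.sum_nonneg fun i _ => sq_nonneg _
  rw [horth, hc1] at hexp
  linarith
end
end

section
/- Let A ∈ ℝ^{m×n} have rank m with m < n, b ∈ ℝ^m, P = {x ∈ ℝⁿ : Ax = b, x ≥ 0}. Let B ⊆ [n] be a feasible basis with N = [n] \ B and x* = (A_B⁻¹ b, 0_N) ∈ P the corresponding basic feasible solution. Let x ∈ P with x ≠ x*, let h^(1), …, h^(k) be a conformal circuit decomposition of x* − x with k ≤ n − m, let g = h^(j) for some j maximizing ‖h^(i)_N‖₁ over i ∈ [k], and let x' = aug_P(x, g). Then ‖x'_N‖₁ ≤ (1 − 1/(n−m)) · ‖x_N‖₁, and |x'_i − x_i| ≤ (n − m) · |x*_i − x_i| for every i ∈ [n]. -/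
open Matrix
open scoped BigOperators

noncomputable section
open Classical

/-- Geometric decay of `‖x_N‖₁` and movement bound for one step of the
`shoot towards the optimum' scheme. -/
theorem geometric_decay {m n : ℕ} (hmn : m < n)
    (A : Matrix (Fin m) (Fin n) ℝ) (hrank : A.rank = m) (b : Fin m → ℝ)
    (P : Set (Fin n → ℝ)) (hP : P = {z : Fin n → ℝ | A.mulVec z = b ∧ 0 ≤ z})
    (B : Finset (Fin n)) (hBcard : B.card = m)
    (hBind : LinearIndependent ℝ (fun i : {i : Fin n // i ∈ B} => A.transpose i.val))
    (xstar : Fin n → ℝ) (hxstarP : xstar ∈ P) (hxstar0 : ∀ i ∉ B, xstar i = 0)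
    (x : Fin n → ℝ) (hxP : x ∈ P) (hxne : x ≠ xstar)
    (k : ℕ) (hk : k ≤ n - m) (h : Fin k → Fin n → ℝ)
    (hhel : ∀ j, h j ∈ elemVecs A)
    (hhconf : ∀ j i, 0 ≤ h j i * (xstar i - x i) ∧ |h j i| ≤ |xstar i - x i|)
    (hhsum : (∑ j, h j) = xstar - x)
    (j₀ : Fin k) (hj₀ : ∀ j, (∑ i ∈ Bᶜ, |h j i|) ≤ ∑ i ∈ Bᶜ, |h j₀ i|)
    (g : Fin n → ℝ) (hg : g = h j₀)
    (α : ℝ) (hα : IsGreatest {a : ℝ | 0 ≤ a ∧ x + a • g ∈ P} α)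
    (x' : Fin n → ℝ) (hx' : x' = x + α • g) :
    (∑ i ∈ Bᶜ, |x' i|) ≤ (1 - 1 / ((n : ℝ) - m)) * ∑ i ∈ Bᶜ, |x i| ∧
    ∀ i, |x' i - x i| ≤ ((n : ℝ) - m) * |xstar i - x i| := by
  subst hP hg hx'
  obtain ⟨hsA, hs0⟩ := hxstarP
  obtain ⟨hxA, hx0⟩ := hxP
  obtain ⟨⟨hα0, hαA, hαp⟩, hαmax⟩ := hα
  obtain ⟨hgA, hgne, -⟩ := hhel j₀
  have hD : (0 : ℝ) < (n : ℝ) - m := by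
    have : (m : ℝ) < n := by exact_mod_cast hmn
    linarith
  have hkD : (k : ℝ) ≤ (n : ℝ) - m := by
    have : k + m ≤ n := by omega
    have : ((k + m : ℕ) : ℝ) ≤ n := by exact_mod_cast this
    push_cast at this
    linarith
  -- step length at least one
  have hα1 : 1 ≤ α := by
    apply hαmax
    refine ⟨zero_le_one, ?_, ?_⟩
    · rw [one_smul, Matrix.mulVec_add, hgA, hxA, add_zero]
    · intro i
      have h1 := hx0 i
      have h2 := hs0 i
      obtain ⟨h3, h4⟩ := hhconf j₀ i
      simp only [Pi.zero_apply, Pi.add_apply, one_smul] at *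
      rcases le_total 0 (xstar i - x i) with hc | hc
      · rw [abs_of_nonneg hc] at h4
        rcases hc.eq_or_lt with he | he
        · rw [← he] at h4
          have := abs_nonpos_iff.mp h4
          linarith
        · have := nonneg_of_mul_nonneg_left h3 he
          linarith
      · rw [abs_of_nonpos hc] at h4
        have := neg_abs_le (h j₀ i)
        linarith
  -- signs on the nonbasic coordinates
  have hneg : ∀ j, ∀ i ∈ Bᶜ, |h j i| = - h j i := by
    intro j i hi
    have h1 : 0 ≤ x i := hx0 i
    obtain ⟨h3, h4⟩ := hhconf j i
    rw [hxstar0 i (Finset.mem_compl.mp hi)] at h3 h4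
    apply abs_of_nonpos
    rcases h1.eq_or_lt with he | he
    · rw [← he] at h4
      simp at h4
      exact h4.le
    · nlinarith
  have hxabs : ∀ i ∈ Bᶜ, |x i| = ∑ j, |h j i| := by
    intro i hi
    rw [Finset.sum_congr rfl (fun j _ => hneg j i hi), Finset.sum_neg_distrib]
    have := congrFun hhsum i
    rw [Finset.sum_apply, Pi.sub_apply, hxstar0 i (Finset.mem_compl.mp hi)] at this
    rw [this, abs_of_nonneg (hx0 i)]
    ring
  set S := ∑ i ∈ Bᶜ, |h j₀ i| with hS
  have hS0 : 0 ≤ S := Finset.sum_nonneg fun i _ => abs_nonneg _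
  have hSx : ∑ i ∈ Bᶜ, |x i| ≤ ((n : ℝ) - m) * S := by
    rw [Finset.sum_congr rfl hxabs, Finset.sum_comm]
    calc _ ≤ ∑ j : Fin k, S := Finset.sum_le_sum fun j _ => hj₀ j
      _ = k * S := by simp
      _ ≤ _ := mul_le_mul_of_nonneg_right hkD hS0
  have hx'S : ∑ i ∈ Bᶜ, |(x + α • h j₀) i| = ∑ i ∈ Bᶜ, |x i| - α * S := by
    rw [hS, Finset.mul_sum, ← Finset.sum_sub_distrib]
    refine Finset.sum_congr rfl fun i hi => ?_
    rw [abs_of_nonneg (hαp i), abs_of_nonneg (hx0 i), hneg j₀ i hi]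
    simp
  have hSpos : 0 < S := by
    refine lt_of_le_of_ne hS0 fun h0 => hgne ?_
    have hz : ∀ i ∈ Bᶜ, h j₀ i = 0 := fun i hi =>
      abs_eq_zero.mp ((Finset.sum_eq_zero_iff_of_nonneg fun i _ => abs_nonneg _).mp h0.symm i hi)
    have hB := Fintype.linearIndependent_iff.mp hBind (fun i => h j₀ i.val) (by
      have h1 : ∑ i : {i : Fin n // i ∈ B}, h j₀ i.val • A.transpose i.val
          = ∑ i ∈ B, h j₀ i • A.transpose i :=
        Finset.sum_coe_sort B (fun i => h j₀ i • A.transpose i)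
      have h2 : ∑ i ∈ B, h j₀ i • A.transpose i = ∑ i, h j₀ i • A.transpose i := by
        apply Finset.sum_subset (Finset.subset_univ _)
        intro i _ hi
        rw [hz i (Finset.mem_compl.mpr hi), zero_smul]
      rw [h1, h2, ← hgA]
      ext r
      simp [Matrix.mulVec, dotProduct, Finset.sum_apply, mul_comm])
    funext i
    by_cases hi : i ∈ B
    · exact hB ⟨i, hi⟩
    · exact hz i (Finset.mem_compl.mpr hi)
  have hαD : α ≤ (n : ℝ) - m := by
    have h1 : 0 ≤ ∑ i ∈ Bᶜ, |(x + α • h j₀) i| := Finset.sum_nonneg fun i _ => abs_nonneg _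
    rw [hx'S] at h1
    exact le_of_mul_le_mul_right (by linarith) hSpos
  constructor
  · rw [hx'S]
    have h1 : (∑ i ∈ Bᶜ, |x i|) / ((n : ℝ) - m) ≤ S := by
      rw [div_le_iff₀ hD]
      linarith
    have h2 : S ≤ α * S := by nlinarith
    have h3 : (1 - 1 / ((n : ℝ) - m)) * ∑ i ∈ Bᶜ, |x i|
        = ∑ i ∈ Bᶜ, |x i| - (∑ i ∈ Bᶜ, |x i|) / ((n : ℝ) - m) := by ring
    rw [h3]
    linarith
  · intro i
    have : (x + α • h j₀) i - x i = α * h j₀ i := by simp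
    rw [this, abs_mul, abs_of_nonneg hα0]
    exact mul_le_mul hαD (hhconf j₀ i).2 (abs_nonneg _) hD.le
end
end

section
/- Let A ∈ ℝ^{m×n} have rank m with m < n, b ∈ ℝ^m, P = {x ∈ ℝⁿ : Ax = b, x ≥ 0}. Let B ⊆ [n] be a feasible basis with N = [n] \ B and x* = (A_B⁻¹ b, 0_N) ∈ P. For y ∈ P define L(y) = {i ∈ [n] : x*_i > n · κ_A · ‖y_N‖₁} and R(y) = {i ∈ [n] : y_i ≤ (n − m) · x*_i}. Let x ∈ P with x ≠ x*, let h^(1), …, h^(k) be a conformal circuit decomposition of x* − x with k ≤ n − m, let g = h^(j) for some j maximizing ‖h^(i)_N‖₁ over i ∈ [k], and let x' = aug_P(x, g). Then L(x) ⊆ L(x') ⊆ B and R(x) ⊆ R(x'). -/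
open Matrix
open scoped BigOperators

noncomputable section
open Classical

/-- Monotonicity of the index sets `L` and `R` along one step of the
`shoot towards the optimum' scheme. -/
theorem L_R_monotone {m n : ℕ} (hmn : m < n)
    (A : Matrix (Fin m) (Fin n) ℝ) (hrank : A.rank = m) (b : Fin m → ℝ)
    (P : Set (Fin n → ℝ)) (hP : P = {z : Fin n → ℝ | A.mulVec z = b ∧ 0 ≤ z})
    (B : Finset (Fin n)) (hBcard : B.card = m)
    (hBind : LinearIndependent ℝ (fun i : {i : Fin n // i ∈ B} => A.transpose i.val))
    (xstar : Fin n → ℝ) (hxstarP : xstar ∈ P) (hxstar0 : ∀ i ∉ B, xstar i = 0)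
    (Lset Rset : (Fin n → ℝ) → Set (Fin n))
    (hLset : Lset = fun y => {i | xstar i > (n : ℝ) * circImb A * ∑ j ∈ Bᶜ, |y j|})
    (hRset : Rset = fun y => {i | y i ≤ ((n : ℝ) - m) * xstar i})
    (x : Fin n → ℝ) (hxP : x ∈ P) (hxne : x ≠ xstar)
    (k : ℕ) (hk : k ≤ n - m) (h : Fin k → Fin n → ℝ)
    (hhel : ∀ j, h j ∈ elemVecs A)
    (hhconf : ∀ j i, 0 ≤ h j i * (xstar i - x i) ∧ |h j i| ≤ |xstar i - x i|)
    (hhsum : (∑ j, h j) = xstar - x)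
    (j₀ : Fin k) (hj₀ : ∀ j, (∑ i ∈ Bᶜ, |h j i|) ≤ ∑ i ∈ Bᶜ, |h j₀ i|)
    (g : Fin n → ℝ) (hg : g = h j₀)
    (α : ℝ) (hα : IsGreatest {a : ℝ | 0 ≤ a ∧ x + a • g ∈ P} α)
    (x' : Fin n → ℝ) (hx' : x' = x + α • g) :
    Lset x ⊆ Lset x' ∧ Lset x' ⊆ ↑B ∧ Rset x ⊆ Rset x' := by
  subst hP hLset hRset hg hx'
  obtain ⟨hsA, hs0⟩ := hxstarP
  obtain ⟨hxA, hx0⟩ := hxP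
  obtain ⟨⟨hα0, hxαA, hxα0⟩, -⟩ := hα
  have hκ : 0 ≤ circImb A := by
    apply Real.sSup_nonneg
    rintro r ⟨g, -, i, j, -, -, rfl⟩
    positivity
  have hgN : ∀ j, ∀ i ∉ B, h j i ≤ 0 := by
    intro j i hi
    have h1 := hhconf j i
    rw [hxstar0 i hi] at h1
    have hxi : 0 ≤ x i := hx0 i
    by_contra hc
    push Not at hc
    rcases hxi.eq_or_lt with h2 | h2
    · rw [← h2] at h1
      have := h1.2
      simp at this
      linarith
    · nlinarith [h1.1]
  have hpos : ∀ i, 0 ≤ x i + α * h j₀ i := fun i => by simpa using hxα0 i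
  have hN : ∑ j ∈ Bᶜ, |(x + α • h j₀) j| ≤ ∑ j ∈ Bᶜ, |x j| := by
    apply Finset.sum_le_sum
    intro i hi
    have hi' : i ∉ B := by simpa using hi
    have h2 := hgN j₀ i hi'
    have h3 : 0 ≤ x i := hx0 i
    have h4 := hpos i
    simp only [Pi.add_apply, Pi.smul_apply, smul_eq_mul]
    rw [abs_of_nonneg h4, abs_of_nonneg h3]
    nlinarith
  have hgpos : 0 < ∑ i ∈ Bᶜ, |h j₀ i| := by
    refine (Finset.sum_nonneg fun i _ => abs_nonneg _).lt_of_ne' ?_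
    intro hz
    rw [Finset.sum_eq_zero_iff_of_nonneg (fun i _ => abs_nonneg _)] at hz
    have hz' : ∀ i ∉ B, h j₀ i = 0 := fun i hi => by simpa using hz i (by simpa using hi)
    obtain ⟨hAg, hg0, -⟩ := hhel j₀
    apply hg0
    have hB := Fintype.linearIndependent_iff.1 hBind (fun i => h j₀ i.val) (by
      rw [Finset.sum_coe_sort B (fun i => h j₀ i • A.transpose i)]
      rw [Finset.sum_subset (Finset.subset_univ B)
        (fun i _ hi => by rw [hz' i hi, zero_smul])]
      rw [← hAg]
      ext r
      simp [Matrix.mulVec, dotProduct, mul_comm])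
    ext i
    by_cases hi : i ∈ B
    · exact hB ⟨i, hi⟩
    · exact hz' i hi
  have hαk : α ≤ (n : ℝ) - m := by
    have hk' : (k : ℝ) ≤ (n : ℝ) - m := by
      rw [← Nat.cast_sub hmn.le]
      exact_mod_cast hk
    refine le_trans ?_ hk'
    have h1 : α * ∑ i ∈ Bᶜ, |h j₀ i| ≤ ∑ i ∈ Bᶜ, x i := by
      rw [Finset.mul_sum]
      apply Finset.sum_le_sum
      intro i hi
      have hi' : i ∉ B := by simpa using hi
      rw [abs_of_nonpos (hgN j₀ i hi')]
      linarith [hpos i]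
    have h2 : ∑ i ∈ Bᶜ, x i ≤ ∑ i ∈ Bᶜ, ∑ j, |h j i| := by
      apply Finset.sum_le_sum
      intro i hi
      have hi' : i ∉ B := by simpa using hi
      have h3 := congrFun hhsum i
      simp only [Finset.sum_apply, Pi.sub_apply, hxstar0 i hi'] at h3
      have h4 := Finset.abs_sum_le_sum_abs (fun j => h j i) Finset.univ
      rw [h3] at h4
      refine le_trans ?_ h4
      rw [zero_sub, abs_neg]
      exact le_abs_self _
    rw [Finset.sum_comm] at h2
    have h5 : ∑ j, ∑ i ∈ Bᶜ, |h j i| ≤ k * ∑ i ∈ Bᶜ, |h j₀ i| := by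
      refine (Finset.sum_le_sum fun j _ => hj₀ j).trans ?_
      simp
    exact le_of_mul_le_mul_right (by linarith) hgpos
  have h1nm : (1 : ℝ) ≤ (n : ℝ) - m := by
    have : (m : ℝ) + 1 ≤ n := by exact_mod_cast hmn
    linarith
  refine ⟨?_, ?_, ?_⟩
  · intro i hi
    simp only [Set.mem_setOf_eq] at hi ⊢
    exact lt_of_le_of_lt (mul_le_mul_of_nonneg_left hN (by positivity)) hi
  · intro i hi
    simp only [Set.mem_setOf_eq] at hi
    by_contra hc
    rw [hxstar0 i (by simpa using hc)] at hi
    have : 0 ≤ (n : ℝ) * circImb A * ∑ j ∈ Bᶜ, |(x + α • h j₀) j| := by positivity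
    linarith
  · intro i hi
    simp only [Set.mem_setOf_eq, Pi.add_apply, Pi.smul_apply, smul_eq_mul] at hi ⊢
    have hxi : 0 ≤ x i := hx0 i
    rcases le_or_gt (h j₀ i) 0 with h1 | h1
    · nlinarith
    · obtain ⟨h2, h3⟩ := hhconf j₀ i
      have h4 : 0 ≤ xstar i - x i := nonneg_of_mul_nonneg_right h2 h1
      rw [abs_of_pos h1, abs_of_nonneg h4] at h3
      have h5 : α * h j₀ i ≤ ((n : ℝ) - m) * (xstar i - x i) :=
        mul_le_mul hαk h3 h1.le (by linarith)
      nlinarith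
end
end

section
/- Let A ∈ ℝ^{m×n} have rank m with m < n, b ∈ ℝ^m, P = {x ∈ ℝⁿ : Ax = b, x ≥ 0}. Let B ⊆ [n] be a feasible basis with N = [n] \ B and x* = (A_B⁻¹ b, 0_N) ∈ P. For y ∈ P define L(y) = {i ∈ [n] : x*_i > n · κ_A · ‖y_N‖₁} and R(y) = {i ∈ [n] : y_i ≤ (n − m) · x*_i}. Let x ∈ P, T = [n] \ L(x), let h^(1), …, h^(k) be a conformal circuit decomposition of x* − x with k ≤ n − m, let g = h^(j) for some j maximizing ‖h^(i)_N‖₁ over i ∈ [k], and let x' = aug_P(x, g). If ‖x_T − x*_T‖_∞ > 2 m n² κ_A² · ‖x*_T‖_∞, then R(x) ⊊ R(x'). -/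
open Matrix
open scoped BigOperators

noncomputable section
open Classical

/-- The ℓ∞-norm of the restriction of `v` to a set of coordinates `T`. -/
def normInfOn {n : ℕ} (T : Set (Fin n)) (v : Fin n → ℝ) : ℝ :=
  sSup ((fun i => |v i|) '' T)

theorem aux_bdd {α β : Type} [Fintype α] [Fintype β] (A : Matrix α β ℝ) :
    BddAbove {r : ℝ | ∃ g ∈ elemVecs A, ∃ i j, g i ≠ 0 ∧ g j ≠ 0 ∧ r = |g j| / |g i|} := by
  apply Set.Finite.bddAbove
  have hsub : {r : ℝ | ∃ g ∈ elemVecs A, ∃ i j, g i ≠ 0 ∧ g j ≠ 0 ∧ r = |g j| / |g i|} ⊆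
      ⋃ p : Set β × β × β, {r : ℝ | ∃ g ∈ elemVecs A, {i | g i ≠ 0} = p.1 ∧ g p.2.1 ≠ 0 ∧
        g p.2.2 ≠ 0 ∧ r = |g p.2.2| / |g p.2.1|} := by
    rintro r ⟨g, hg, i, j, hi, hj, hr⟩
    exact Set.mem_iUnion.2 ⟨({i | g i ≠ 0}, i, j), g, hg, rfl, hi, hj, hr⟩
  refine Set.Finite.subset (Set.finite_iUnion fun p => ?_) hsub
  apply Set.Subsingleton.finite
  rintro r ⟨g, hg, hS, hi, hj, hr⟩ r' ⟨g', hg', hS', hi', hj', hr'⟩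
  obtain ⟨S, i, j⟩ := p
  simp only at *
  have hz : g - (g i / g' i) • g' = 0 := by
    by_contra hne
    refine hg.2.2 _ ?_ hne ?_
    · rw [Matrix.mulVec_sub, Matrix.mulVec_smul, hg.1, hg'.1]; simp
    · rw [Set.ssubset_iff_of_subset]
      · refine ⟨i, hi, ?_⟩
        simp [hi']
      · intro t ht
        by_contra hgt
        have h2 : t ∉ {i | g' i ≠ 0} := by rw [hS', ← hS]; exact hgt
        simp only [Set.mem_ofPred_eq, not_not] at hgt h2
        apply ht
        simp [hgt, h2]
  have hjj := congrFun hz j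
  simp only [Pi.sub_apply, Pi.smul_apply, smul_eq_mul, Pi.zero_apply] at hjj
  have e : g j = g i / g' i * g' j := by linarith
  rw [hr, hr', e, abs_mul, abs_div]
  have := abs_pos.2 hi
  have := abs_pos.2 hi'
  field_simp

theorem aux_ratio {α β : Type} [Fintype α] [Fintype β] (A : Matrix α β ℝ) (g : β → ℝ)
    (hg : g ∈ elemVecs A) (i j : β) (hi : g i ≠ 0) : |g j| ≤ circImb A * |g i| := by
  have hp := abs_pos.2 hi
  have key : ∀ j, g j ≠ 0 → |g j| ≤ circImb A * |g i| := by
    intro j hj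
    rw [← div_le_iff₀ hp]
    exact le_csSup (aux_bdd A) ⟨g, hg, i, j, hi, hj, rfl⟩
  by_cases hj : g j = 0
  · rw [hj, abs_zero]
    exact (abs_nonneg _).trans (key i hi)
  · exact key j hj

theorem aux_one_le {α β : Type} [Fintype α] [Fintype β] (A : Matrix α β ℝ) (g : β → ℝ)
    (hg : g ∈ elemVecs A) : 1 ≤ circImb A := by
  obtain ⟨i, hi⟩ := Function.ne_iff.1 hg.2.1
  have hp := abs_pos.2 hi
  have := aux_ratio A g hg i i hi
  by_contra hc
  push Not at hc
  nlinarith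

theorem aux_card {m n : ℕ} (A : Matrix (Fin m) (Fin n) ℝ) (g : Fin n → ℝ)
    (hg : g ∈ elemVecs A) : (Finset.univ.filter fun i => g i ≠ 0).card ≤ m + 1 := by
  obtain ⟨e, he⟩ := Function.ne_iff.1 hg.2.1
  simp only [Pi.zero_apply] at he
  by_contra hc
  push Not at hc
  set S := (Finset.univ.filter fun i => g i ≠ 0).erase e with hS
  have hcard : m < S.card := by
    rw [hS, Finset.card_erase_of_mem (by simp [he])]; omega
  let f : (S → ℝ) →ₗ[ℝ] (Fin m → ℝ) := (A.submatrix id (fun s : S => s.1)).mulVecLin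
  have hker : LinearMap.ker f ≠ ⊥ := by
    apply LinearMap.ker_ne_bot_of_finrank_lt
    simpa using hcard
  obtain ⟨v, hv, hv0⟩ := (Submodule.ne_bot_iff _).1 hker
  let w : Fin n → ℝ := fun i => if hi : i ∈ S then v ⟨i, hi⟩ else 0
  have hw : ∀ s : S, w s.1 = v s := fun s => by simp [w]
  have hw' : ∀ i, i ∉ S → w i = 0 := fun i hi => by simp [w, hi]
  refine hg.2.2 w ?_ ?_ ?_
  · ext r
    have h1 := congrFun (LinearMap.mem_ker.1 hv) r
    simp only [f, Matrix.mulVecLin_apply, Matrix.mulVec, dotProduct, Matrix.submatrix_apply, id,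
      Pi.zero_apply] at h1 ⊢
    rw [← h1, ← Finset.sum_subset (Finset.subset_univ S) (fun i _ hi => by rw [hw' i hi, mul_zero]),
      ← Finset.sum_coe_sort S]
    exact Finset.sum_congr rfl fun s _ => by rw [hw]
  · intro h0
    apply hv0
    ext s
    rw [← hw, h0]; rfl
  · rw [Set.ssubset_iff_of_subset]
    · refine ⟨e, he, ?_⟩
      simp only [Set.mem_ofPred_eq, not_not]
      exact hw' e (by simp [hS])
    · intro t ht
      by_contra hgt
      apply ht
      apply hw'
      simp only [Set.mem_ofPred_eq, not_not] at hgt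
      simp [hS, hgt]

theorem aux_nonbasic {m n : ℕ} (A : Matrix (Fin m) (Fin n) ℝ) (B : Finset (Fin n))
    (hBind : LinearIndependent ℝ (fun i : {i : Fin n // i ∈ B} => A.transpose i.val))
    (g : Fin n → ℝ) (hg : g ∈ elemVecs A) : ∃ i, i ∉ B ∧ g i ≠ 0 := by
  by_contra hc
  push Not at hc
  apply hg.2.1
  have hz : ∑ s : {i : Fin n // i ∈ B}, g s.1 • A.transpose s.1 = 0 := by
    ext r
    have h1 := congrFun hg.1 r
    simp only [Matrix.mulVec, dotProduct, Pi.zero_apply] at h1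
    rw [← Finset.sum_subset (Finset.subset_univ B) (fun i _ hi => by rw [hc i hi, mul_zero]),
      ← Finset.sum_coe_sort B] at h1
    rw [Pi.zero_apply, ← h1, Finset.sum_apply]
    exact Finset.sum_congr rfl fun s _ => by simp [mul_comm]
  have := Fintype.linearIndependent_iff.1 hBind (fun s => g s.1) hz
  ext i
  by_cases hi : i ∈ B
  · exact this ⟨i, hi⟩
  · exact hc i hi

theorem aux_le_sum {m n : ℕ} (A : Matrix (Fin m) (Fin n) ℝ) (B : Finset (Fin n))
    (hBind : LinearIndependent ℝ (fun i : {i : Fin n // i ∈ B} => A.transpose i.val))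
    (g : Fin n → ℝ) (hg : g ∈ elemVecs A) (i : Fin n) :
    |g i| ≤ circImb A * ∑ j ∈ Bᶜ, |g j| := by
  obtain ⟨t, htB, ht⟩ := aux_nonbasic A B hBind g hg
  refine (aux_ratio A g hg t i ht).trans ?_
  have := aux_one_le A g hg
  refine mul_le_mul_of_nonneg_left ?_ (by linarith)
  exact Finset.single_le_sum (f := fun j => |g j|) (fun j _ => abs_nonneg _)
    (Finset.mem_compl.2 htB)

theorem aux_sum_le {m n : ℕ} (A : Matrix (Fin m) (Fin n) ℝ) (B : Finset (Fin n))
    (g : Fin n → ℝ) (hg : g ∈ elemVecs A) (i : Fin n) (hi : g i ≠ 0) :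
    ∑ j ∈ Bᶜ, |g j| ≤ ((m : ℝ) + 1) * (circImb A * |g i|) := by
  have hk := aux_one_le A g hg
  have h0 : 0 ≤ circImb A * |g i| := mul_nonneg (by linarith) (abs_nonneg _)
  calc ∑ j ∈ Bᶜ, |g j| ≤ ∑ j, |g j| :=
        Finset.sum_le_sum_of_subset_of_nonneg (Finset.subset_univ _) (fun _ _ _ => abs_nonneg _)
    _ = ∑ j ∈ Finset.univ.filter (fun j => g j ≠ 0), |g j| := by
        symm
        apply Finset.sum_subset (Finset.subset_univ _)
        intro j _ hj
        simpa using hj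
    _ ≤ (Finset.univ.filter (fun j => g j ≠ 0)).card • (circImb A * |g i|) :=
        Finset.sum_le_card_nsmul _ _ _ (fun j _ => aux_ratio A g hg i j hi)
    _ ≤ _ := by
        rw [nsmul_eq_mul]
        refine mul_le_mul_of_nonneg_right ?_ h0
        exact_mod_cast aux_card A g hg

set_option maxHeartbeats 1000000 in
/-- If `‖x_T - x*_T‖_∞ > 2 m n² κ_A² ‖x*_T‖_∞` for `T = [n] ∖ L(x)`, then the set `R`
strictly grows in one step of the `shoot towards the optimum' scheme. -/
theorem R_strictly_grows {m n : ℕ} (hmn : m < n)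
    (A : Matrix (Fin m) (Fin n) ℝ) (hrank : A.rank = m) (b : Fin m → ℝ)
    (P : Set (Fin n → ℝ)) (hP : P = {z : Fin n → ℝ | A.mulVec z = b ∧ 0 ≤ z})
    (B : Finset (Fin n)) (hBcard : B.card = m)
    (hBind : LinearIndependent ℝ (fun i : {i : Fin n // i ∈ B} => A.transpose i.val))
    (xstar : Fin n → ℝ) (hxstarP : xstar ∈ P) (hxstar0 : ∀ i ∉ B, xstar i = 0)
    (Lset Rset : (Fin n → ℝ) → Set (Fin n))
    (hLset : Lset = fun y => {i | xstar i > (n : ℝ) * circImb A * ∑ j ∈ Bᶜ, |y j|})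
    (hRset : Rset = fun y => {i | y i ≤ ((n : ℝ) - m) * xstar i})
    (x : Fin n → ℝ) (hxP : x ∈ P) (hxne : x ≠ xstar)
    (T : Set (Fin n)) (hT : T = (Lset x)ᶜ)
    (k : ℕ) (hk : k ≤ n - m) (h : Fin k → Fin n → ℝ)
    (hhel : ∀ j, h j ∈ elemVecs A)
    (hhconf : ∀ j i, 0 ≤ h j i * (xstar i - x i) ∧ |h j i| ≤ |xstar i - x i|)
    (hhsum : (∑ j, h j) = xstar - x)
    (j₀ : Fin k) (hj₀ : ∀ j, (∑ i ∈ Bᶜ, |h j i|) ≤ ∑ i ∈ Bᶜ, |h j₀ i|)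
    (g : Fin n → ℝ) (hg : g = h j₀)
    (α : ℝ) (hα : IsGreatest {a : ℝ | 0 ≤ a ∧ x + a • g ∈ P} α)
    (x' : Fin n → ℝ) (hx' : x' = x + α • g)
    (hbig : normInfOn T (x - xstar) >
      2 * (m : ℝ) * (n : ℝ) ^ 2 * (circImb A) ^ 2 * normInfOn T xstar) :
    Rset x ⊂ Rset x' := by
  subst hP hLset hRset hT hg hx'
  set κ := circImb A with hκ
  have hκ1 : 1 ≤ κ := aux_one_le A _ (hhel j₀)
  obtain ⟨hxA, hx0⟩ := hxP
  obtain ⟨hsA, hs0⟩ := hxstarP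
  obtain ⟨⟨hα0, hαA, hαP⟩, hαmax⟩ := hα
  have hx0' : ∀ i, 0 ≤ x i := fun i => hx0 i
  have hs0' : ∀ i, 0 ≤ xstar i := fun i => hs0 i
  have hαP' : ∀ i, 0 ≤ x i + α * h j₀ i := fun i => by simpa using hαP i
  have hgA : A.mulVec (h j₀) = 0 := (hhel j₀).1
  have hmemA : ∀ a : ℝ, A.mulVec (x + a • h j₀) = b := fun a => by
    rw [Matrix.mulVec_add, Matrix.mulVec_smul, hgA, hxA]; simp
  -- conformality, case form
  have hconf : ∀ j i, (0 ≤ h j i ∧ h j i ≤ xstar i - x i) ∨ (h j i ≤ 0 ∧ xstar i - x i ≤ h j i) := by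
    intro j i
    obtain ⟨h1, h2⟩ := hhconf j i
    rcases le_total 0 (xstar i - x i) with hd | hd
    · rw [abs_of_nonneg hd] at h2
      left
      have := abs_le.1 h2
      refine ⟨?_, this.2⟩
      by_contra hc
      push Not at hc
      nlinarith
    · rw [abs_of_nonpos hd] at h2
      right
      have := abs_le.1 h2
      refine ⟨?_, by linarith⟩
      by_contra hc
      push Not at hc
      nlinarith
  have hα1 : 1 ≤ α := by
    apply hαmax
    refine ⟨zero_le_one, hmemA 1, fun i => ?_⟩
    have := hx0' i
    have := hs0' i
    simp only [Pi.zero_apply, Pi.add_apply, one_smul]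
    rcases hconf j₀ i with hc | hc <;> linarith
  have hsum : ∀ i, ∑ j, h j i = xstar i - x i := fun i => by
    have := congrFun hhsum i
    simpa using this
  have hNneg : ∀ j, ∀ i ∈ Bᶜ, |h j i| = - h j i := by
    intro j i hi
    have h0 := hxstar0 i (Finset.mem_compl.1 hi)
    have := hx0' i
    apply abs_of_nonpos
    rcases hconf j i with hc | hc <;> linarith
  set S := ∑ j ∈ Bᶜ, |x j| with hS
  set G := ∑ i ∈ Bᶜ, |h j₀ i| with hG
  have hSeq : S = ∑ j, ∑ i ∈ Bᶜ, |h j i| := by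
    rw [Finset.sum_comm]
    refine Finset.sum_congr rfl fun i hi => ?_
    rw [Finset.sum_congr rfl (fun j _ => hNneg j i hi), Finset.sum_neg_distrib, hsum,
      hxstar0 i (Finset.mem_compl.1 hi), abs_of_nonneg (hx0' i)]
    ring
  have hGpos : 0 < G := by
    obtain ⟨t, htB, ht⟩ := aux_nonbasic A B hBind _ (hhel j₀)
    exact Finset.sum_pos' (fun _ _ => abs_nonneg _) ⟨t, Finset.mem_compl.2 htB, abs_pos.2 ht⟩
  have hkd : (k : ℝ) ≤ (n : ℝ) - m := by
    have : k + m ≤ n := by omega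
    have : (k : ℝ) + m ≤ n := by exact_mod_cast this
    linarith
  have hd1 : 1 ≤ (n : ℝ) - m := by
    have : (m : ℝ) + 1 ≤ n := by exact_mod_cast hmn
    linarith
  have hSG : S ≤ ((n : ℝ) - m) * G := by
    rw [hSeq]
    calc _ ≤ ∑ j : Fin k, G := Finset.sum_le_sum fun j _ => hj₀ j
      _ = k * G := by simp
      _ ≤ _ := mul_le_mul_of_nonneg_right hkd hGpos.le
  have hαG : α * G ≤ S := by
    rw [hG, hS, Finset.mul_sum]
    refine Finset.sum_le_sum fun i hi => ?_
    rw [hNneg j₀ i hi, abs_of_nonneg (hx0' i)]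
    linarith [hαP' i]
  have hαd : α ≤ (n : ℝ) - m := le_of_mul_le_mul_right (hαG.trans hSG) hGpos
  have hdist : ∀ i, |x i - xstar i| ≤ κ * S := by
    intro i
    rw [abs_sub_comm, ← hsum, hSeq, Finset.mul_sum]
    exact (Finset.abs_sum_le_sum_abs _ _).trans
      (Finset.sum_le_sum fun j _ => aux_le_sum A B hBind _ (hhel j) i)
  have hS0 : 0 ≤ S := Finset.sum_nonneg fun _ _ => abs_nonneg _
  -- blocking coordinate
  obtain ⟨i, hgi, hxi⟩ : ∃ i, h j₀ i < 0 ∧ x i + α * h j₀ i = 0 := by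
    by_contra hc
    push Not at hc
    have hev : ∀ᶠ ε : ℝ in nhdsWithin 0 (Set.Ioi 0), ∀ i, 0 ≤ x i + (α + ε) * h j₀ i := by
      rw [Filter.eventually_all]
      intro i
      rcases le_or_gt 0 (h j₀ i) with hp | hp
      · filter_upwards [self_mem_nhdsWithin] with ε hε
        have hε' : 0 < ε := hε
        nlinarith [hαP' i, mul_nonneg hε'.le hp]
      · have hpos : 0 < x i + α * h j₀ i := lt_of_le_of_ne (hαP' i) (Ne.symm (hc i hp))
        have hcont : ContinuousAt (fun ε : ℝ => x i + (α + ε) * h j₀ i) 0 := by fun_prop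
        have := hcont.eventually (lt_mem_nhds (a := 0) (by simpa using hpos))
        exact (this.filter_mono nhdsWithin_le_nhds).mono fun ε hε => hε.le
    obtain ⟨ε, hε, hε0⟩ := (hev.and self_mem_nhdsWithin).exists
    have hε0' : 0 < ε := hε0
    have : α + ε ≤ α := hαmax ⟨by linarith, hmemA _, fun i => by simpa using hε i⟩
    linarith
  rw [Set.ssubset_iff_of_subset]
  · refine ⟨i, ?_, ?_⟩
    · simp only [Set.mem_ofPred_eq, Pi.add_apply, Pi.smul_apply, smul_eq_mul]
      rw [hxi]
      exact mul_nonneg (by linarith) (hs0' i)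
    · simp only [Set.mem_ofPred_eq, not_le]
      have habs : |h j₀ i| = - h j₀ i := abs_of_neg hgi
      have hxg : |h j₀ i| ≤ x i := by rw [habs]; nlinarith
      have hgpos : 0 < |h j₀ i| := abs_pos.2 hgi.ne
      by_cases hiB : i ∈ B
      · have hxκ : x i ≤ κ * S := by
          have h1 := aux_le_sum A B hBind _ (hhel j₀) i
          rw [← hκ, ← hG, habs] at h1
          calc x i = α * (- h j₀ i) := by linarith
            _ ≤ α * (κ * G) := mul_le_mul_of_nonneg_left h1 hα0
            _ = κ * (α * G) := by ring
            _ ≤ κ * S := mul_le_mul_of_nonneg_left hαG (by linarith)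
        have hsx : xstar i ≤ x i := by
          rcases hconf j₀ i with hc | hc <;> linarith
        have hn1 : (1 : ℝ) ≤ n := by
          have : (0 : ℝ) ≤ m := Nat.cast_nonneg m
          linarith
        have hm1 : (1 : ℝ) ≤ m := by
          have : 0 < m := by rw [← hBcard]; exact Finset.card_pos.2 ⟨i, hiB⟩
          exact_mod_cast this
        have hκS : 0 ≤ κ * S := mul_nonneg (by linarith) hS0
        set T : Set (Fin n) := {i | xstar i > (n : ℝ) * κ * S}ᶜ with hT
        have hiT : i ∈ T := by
          simp only [hT, Set.mem_compl_iff, Set.mem_ofPred_eq, not_lt, gt_iff_lt]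
          rw [mul_assoc]
          nlinarith
        have hM : xstar i ≤ normInfOn T xstar := by
          rw [← abs_of_nonneg (hs0' i)]
          exact le_csSup (Set.toFinite _).bddAbove ⟨i, hiT, rfl⟩
        have hD : normInfOn T (x - xstar) ≤ κ * S := by
          refine Real.sSup_le ?_ hκS
          rintro _ ⟨t, _, rfl⟩
          exact hdist t
        set M := normInfOn T xstar with hMdef
        have hM0 : 0 ≤ M := (hs0' i).trans hM
        have hb : κ * (2 * m * n ^ 2 * κ * M) < κ * S := by
          have e : κ * (2 * m * n ^ 2 * κ * M) = 2 * (m : ℝ) * (n : ℝ) ^ 2 * κ ^ 2 * M := by ring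
          rw [e]; exact lt_of_lt_of_le hbig hD
        have hb2 : 2 * m * n ^ 2 * κ * M < S := lt_of_mul_lt_mul_left hb (by linarith)
        have hG2 : G ≤ (2 * m) * (κ * x i) := by
          refine (aux_sum_le A B _ (hhel j₀) i hgi.ne).trans ?_
          have : κ * |h j₀ i| ≤ κ * x i := mul_le_mul_of_nonneg_left hxg (by linarith)
          have h3 : 0 ≤ κ * |h j₀ i| := mul_nonneg (by linarith) hgpos.le
          exact mul_le_mul (by linarith) this h3 (by linarith)
        set d := (n : ℝ) - m with hd
        have hS2 : S ≤ d * ((2 * m) * (κ * x i)) :=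
          hSG.trans (mul_le_mul_of_nonneg_left hG2 (by linarith))
        have h4 : (2 * m * κ) * (n ^ 2 * M) < (2 * m * κ) * (d * x i) := by
          calc _ = 2 * m * n ^ 2 * κ * M := by ring
            _ < S := hb2
            _ ≤ _ := hS2
            _ = _ := by ring
        have h5 : (n : ℝ) ^ 2 * M < d * x i :=
          lt_of_mul_lt_mul_left h4 (by positivity)
        have h6 : d ^ 2 * M ≤ (n : ℝ) ^ 2 * M := by
          refine mul_le_mul_of_nonneg_right ?_ hM0
          exact pow_le_pow_left₀ (by linarith) (by linarith) 2
        have h7 : d * (d * M) < d * x i := by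
          calc _ = d ^ 2 * M := by ring
            _ ≤ _ := h6
            _ < _ := h5
        have h8 : d * M < x i := lt_of_mul_lt_mul_left h7 (by linarith)
        exact lt_of_le_of_lt (mul_le_mul_of_nonneg_left hM (by linarith)) h8
      · rw [hxstar0 i hiB, mul_zero]
        linarith
  · intro t ht
    simp only [Set.mem_ofPred_eq, Pi.add_apply, Pi.smul_apply, smul_eq_mul] at ht ⊢
    have := hx0' t
    rcases hconf j₀ t with hc | hc
    · have h1 : α * h j₀ t ≤ ((n : ℝ) - m) * (xstar t - x t) :=
        mul_le_mul hαd hc.2 hc.1 (by linarith)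
      nlinarith
    · have : α * h j₀ t ≤ 0 := mul_nonpos_of_nonneg_of_nonpos hα0 hc.1
      linarith
end
end

section
/- Let A ∈ ℝ^{m×n}, b ∈ ℝ^m, c̃ ∈ ℝⁿ with c̃ ≥ 0, and P = {x ∈ ℝⁿ : Ax = b, x ≥ 0}. Let x ∈ P, let g minimize ⟨c̃, z⟩ over F = {z ∈ ker(A) : Σ_{i ∈ supp(x)} z_i⁻ / x_i ≤ 1 and z_i ≥ 0 for all i ∉ supp(x)}, and let s ∈ ℝⁿ satisfy s − c̃ ∈ Im(Aᵀ), s ≥ 0, and s_i x_i ≤ −⟨c̃, g⟩ for all i ∈ [n] (dual optimality for the minimum-ratio problem with weights 1/x). If ⟨c̃, g⟩ = 0, then ⟨s, x⟩ = 0; consequently x is an optimal solution of min ⟨c̃, z⟩ over z ∈ P. -/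
open Matrix
open scoped BigOperators

noncomputable section
open Classical

/-- If `Ratio-Circuit` returns a direction of value `⟨c̃, g⟩ = 0`, then the current point is
optimal: `⟨s, x⟩ = 0` and `x` minimizes `⟨c̃, ·⟩` over `P`. -/
theorem ratio_circuit_terminate {m n : ℕ}
    (A : Matrix (Fin m) (Fin n) ℝ) (b : Fin m → ℝ)
    (ctil : Fin n → ℝ) (hctil : 0 ≤ ctil)
    (P : Set (Fin n → ℝ)) (hP : P = {z : Fin n → ℝ | A.mulVec z = b ∧ 0 ≤ z})
    (x : Fin n → ℝ) (hx : x ∈ P)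
    (F : Set (Fin n → ℝ))
    (hF : F = {z : Fin n → ℝ | A.mulVec z = 0 ∧
      (∑ i ∈ Finset.univ.filter (fun i => x i ≠ 0), max 0 (-(z i)) / x i) ≤ 1 ∧
      ∀ i, x i = 0 → 0 ≤ z i})
    (g : Fin n → ℝ) (hgF : g ∈ F) (hgmin : ∀ z ∈ F, ctil ⬝ᵥ g ≤ ctil ⬝ᵥ z)
    (s : Fin n → ℝ) (hsnonneg : 0 ≤ s)
    (hsdual : ∃ y : Fin m → ℝ, s - ctil = A.transpose.mulVec y)
    (hsx : ∀ i, s i * x i ≤ -(ctil ⬝ᵥ g))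
    (hzero : ctil ⬝ᵥ g = 0) :
    s ⬝ᵥ x = 0 ∧ ∀ z ∈ P, ctil ⬝ᵥ x ≤ ctil ⬝ᵥ z := by
  subst hP
  obtain ⟨hxA, hx0⟩ := hx
  obtain ⟨y, hy⟩ := hsdual
  have h0 : s ⬝ᵥ x = 0 := by
    apply Finset.sum_eq_zero
    intro i _
    have h1 := hsx i
    rw [hzero, neg_zero] at h1
    exact le_antisymm h1 (mul_nonneg (hsnonneg i) (hx0 i))
  have key : ∀ z : Fin n → ℝ, A.mulVec z = b → s ⬝ᵥ z - ctil ⬝ᵥ z = y ⬝ᵥ b := by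
    intro z hz
    rw [← sub_dotProduct, hy, Matrix.mulVec_transpose, ← Matrix.dotProduct_mulVec, hz]
  refine ⟨h0, ?_⟩
  rintro z ⟨hzA, hz0⟩
  have h1 := key x hxA
  have h2 := key z hzA
  have h3 : 0 ≤ s ⬝ᵥ z := Finset.sum_nonneg fun i _ => mul_nonneg (hsnonneg i) (hz0 i)
  linarith
end
end

section
/- Let A ∈ ℝ^{m_A×n} and B ∈ ℝ^{m_B×n} with rk([A; B]) = n (the stacked matrix has rank n), and let M = [[A, 0], [B, I_{m_B}]] ∈ ℝ^{(m_A+m_B)×(n+m_B)}. Then a vector g ∈ ℝⁿ is an elementary vector in the general-form sense (i.e., g ∈ ker(A), Bg ≠ 0, and Bg is support-minimal in {By : y ∈ ker(A)} \ {0}) if and only if there exists h ∈ ℝ^{m_B} with (g, h) ∈ ker(M), h ≠ 0, and h support-minimal in the projection of ker(M) onto the last m_B coordinates. Moreover, for every b ∈ ℝ^{m_A}, d ∈ ℝ^{m_B}, writing P = {x ∈ ℝⁿ : Ax = b, Bx ≤ d} and Q = {s ∈ ℝ^{m_B} : ∃x, M(x, s) = (b, d), s ≥ 0}, the map ψ defined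 by M(ψ(s), s) = (b, d) is a well-defined invertible affine one-to-one mapping from Q onto P, and for any such pair (g, h) and any s ∈ Q, ψ(aug_Q(s, h)) = aug_P(ψ(s), g). -/
open Matrix
open scoped BigOperators

noncomputable section
open Classical

/-- Circuits in general form reduce to circuits in subspace (standard) form:
elementary vectors in the sense of Kafer–Pashkovich–Sanità correspond one-to-one to
elementary vectors of the projection of `ker M` onto the slack coordinates, the polyhedron
`P = {x : Ax = b, Bx ≤ d}` is the image of `Q` under an invertible affine one-to-one map `ψ`,
and `ψ` intertwines maximal circuit augmentations. -/
theorem general_form_circuits {mA mB n : ℕ}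
    (A : Matrix (Fin mA) (Fin n) ℝ) (B : Matrix (Fin mB) (Fin n) ℝ)
    (hrank : (Matrix.fromRows A B).rank = n)
    (M : Matrix (Fin mA ⊕ Fin mB) (Fin n ⊕ Fin mB) ℝ)
    (hM : M = Matrix.fromBlocks A 0 B 1) :
    (∀ g : Fin n → ℝ,
      (A.mulVec g = 0 ∧ B.mulVec g ≠ 0 ∧
        ∀ y : Fin n → ℝ, A.mulVec y = 0 → B.mulVec y ≠ 0 →
          ¬ ({i | B.mulVec y i ≠ 0} ⊂ {i | B.mulVec g i ≠ 0}))
      ↔ (∃ h : Fin mB → ℝ, M.mulVec (Sum.elim g h) = 0 ∧ h ≠ 0 ∧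
          ∀ h' : Fin mB → ℝ, (∃ x' : Fin n → ℝ, M.mulVec (Sum.elim x' h') = 0) → h' ≠ 0 →
            ¬ ({i | h' i ≠ 0} ⊂ {i | h i ≠ 0}))) ∧
    (∀ (b : Fin mA → ℝ) (d : Fin mB → ℝ),
      ∃ ψ : (Fin mB → ℝ) →ᵃ[ℝ] (Fin n → ℝ),
        (∀ s ∈ {s : Fin mB → ℝ |
            (∃ x : Fin n → ℝ, M.mulVec (Sum.elim x s) = Sum.elim b d) ∧ 0 ≤ s},
          M.mulVec (Sum.elim (ψ s) s) = Sum.elim b d) ∧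
        Set.BijOn ψ
          {s : Fin mB → ℝ |
            (∃ x : Fin n → ℝ, M.mulVec (Sum.elim x s) = Sum.elim b d) ∧ 0 ≤ s}
          {x : Fin n → ℝ | A.mulVec x = b ∧ B.mulVec x ≤ d} ∧
        (∀ (g : Fin n → ℝ) (h : Fin mB → ℝ),
          M.mulVec (Sum.elim g h) = 0 → h ≠ 0 →
          (∀ h' : Fin mB → ℝ, (∃ x' : Fin n → ℝ, M.mulVec (Sum.elim x' h') = 0) → h' ≠ 0 →
            ¬ ({i | h' i ≠ 0} ⊂ {i | h i ≠ 0})) →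
          ∀ s ∈ {s : Fin mB → ℝ |
              (∃ x : Fin n → ℝ, M.mulVec (Sum.elim x s) = Sum.elim b d) ∧ 0 ≤ s},
            ∀ αQ αP : ℝ,
              IsGreatest {a : ℝ | 0 ≤ a ∧ (s + a • h) ∈
                {s' : Fin mB → ℝ |
                  (∃ x : Fin n → ℝ, M.mulVec (Sum.elim x s') = Sum.elim b d) ∧ 0 ≤ s'}} αQ →
              IsGreatest {a : ℝ | 0 ≤ a ∧ (ψ s + a • g) ∈
                {x : Fin n → ℝ | A.mulVec x = b ∧ B.mulVec x ≤ d}} αP →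
              ψ (s + αQ • h) = ψ s + αP • g)) := by
  have hk : ∀ (x : Fin n → ℝ) (s : Fin mB → ℝ) (b : Fin mA → ℝ) (d : Fin mB → ℝ),
      M.mulVec (Sum.elim x s) = Sum.elim b d ↔ A.mulVec x = b ∧ B.mulVec x + s = d := by
    intro x s b d
    rw [hM, Matrix.fromBlocks_mulVec, Sum.elim_eq_iff]
    simp
  have hk0 : ∀ (x : Fin n → ℝ) (s : Fin mB → ℝ),
      M.mulVec (Sum.elim x s) = 0 ↔ A.mulVec x = 0 ∧ B.mulVec x + s = 0 := by
    intro x s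
    rw [← hk, Sum.elim_zero_zero]
  have hinj : Function.Injective (Matrix.fromRows A B).mulVecLin := by
    rw [← LinearMap.ker_eq_bot]
    have h1 := LinearMap.finrank_range_add_finrank_ker (Matrix.fromRows A B).mulVecLin
    have h2 : Module.finrank ℝ (LinearMap.range (Matrix.fromRows A B).mulVecLin) = n := hrank
    rw [h2, Module.finrank_fin_fun] at h1
    exact Submodule.finrank_eq_zero.mp (by omega)
  obtain ⟨L, hL⟩ := LinearMap.exists_leftInverse_of_injective _ (LinearMap.ker_eq_bot.mpr hinj)
  have hL' : ∀ x, L (Sum.elim (A.mulVec x) (B.mulVec x)) = x := by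
    intro x
    have := LinearMap.congr_fun hL x
    simpa [Matrix.fromRows_mulVec] using this
  refine ⟨?_, ?_⟩
  · intro g
    constructor
    · rintro ⟨h1, h2, h3⟩
      refine ⟨-B.mulVec g, (hk0 _ _).2 ⟨h1, by simp⟩, by simpa using h2, ?_⟩
      rintro h' ⟨x', hx'⟩ hne
      obtain ⟨ha, hb⟩ := (hk0 _ _).1 hx'
      obtain rfl := eq_neg_of_add_eq_zero_right hb
      have := h3 x' ha (by simpa using hne)
      simpa using this
    · rintro ⟨h, h1, h2, h3⟩
      obtain ⟨ha, hb⟩ := (hk0 _ _).1 h1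
      obtain rfl := eq_neg_of_add_eq_zero_right hb
      refine ⟨ha, by simpa using h2, ?_⟩
      intro y hy hy'
      have := h3 (-B.mulVec y) ⟨y, (hk0 _ _).2 ⟨hy, by simp⟩⟩ (by simpa using hy')
      simpa using this
  · intro b d
    let N : (Fin mB → ℝ) →ₗ[ℝ] (Fin mA ⊕ Fin mB → ℝ) :=
      { toFun := fun s => Sum.elim 0 (-s)
        map_add' := by
          intro x y
          ext i
          rcases i with i | i <;> simp [add_comm]
        map_smul' := by
          intro c x
          ext i
          rcases i with i | i <;> simp }
    let ψ : (Fin mB → ℝ) →ᵃ[ℝ] (Fin n → ℝ) :=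
      (L ∘ₗ N).toAffineMap + AffineMap.const ℝ _ (L (Sum.elim b d))
    have hψ : ∀ x s, M.mulVec (Sum.elim x s) = Sum.elim b d → ψ s = x := by
      intro x s hx
      obtain ⟨h1, h2⟩ := (hk _ _ _ _).1 hx
      have e : ψ s = L (N s) + L (Sum.elim b d) := rfl
      rw [e, ← map_add]
      conv_rhs => rw [← hL' x]
      congr 1
      ext i
      rcases i with i | i
      · simp [N, h1]
      · simp [N, ← h2]
    clear_value ψ
    refine ⟨ψ, ?_, ⟨?_, ?_, ?_⟩, ?_⟩
    · rintro s ⟨⟨x, hx⟩, -⟩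
      rwa [hψ x s hx]
    · rintro s ⟨⟨x, hx⟩, hs⟩
      rw [hψ x s hx]
      obtain ⟨h1, h2⟩ := (hk _ _ _ _).1 hx
      refine ⟨h1, ?_⟩
      rw [← h2]
      exact le_add_of_nonneg_right hs
    · rintro s ⟨⟨x, hx⟩, hs⟩ t ⟨⟨y, hy⟩, ht⟩ hst
      rw [hψ x s hx, hψ y t hy] at hst
      subst hst
      have h1 := ((hk _ _ _ _).1 hx).2
      have h2 := ((hk _ _ _ _).1 hy).2
      exact add_left_cancel (h1.trans h2.symm)
    · rintro x ⟨h1, h2⟩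
      have hx : M.mulVec (Sum.elim x (d - B.mulVec x)) = Sum.elim b d :=
        (hk _ _ _ _).2 ⟨h1, by simp⟩
      exact ⟨d - B.mulVec x, ⟨⟨x, hx⟩, sub_nonneg.2 h2⟩, hψ _ _ hx⟩
    · rintro g h hgh - - s ⟨⟨x, hx⟩, hs⟩ αQ αP hQ hP
      rw [hψ x s hx] at hP ⊢
      obtain ⟨h1, h2⟩ := (hk _ _ _ _).1 hx
      obtain ⟨h3, h4⟩ := (hk0 _ _).1 hgh
      have hall : ∀ a : ℝ, M.mulVec (Sum.elim (x + a • g) (s + a • h)) = Sum.elim b d := by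
        intro a
        refine (hk _ _ _ _).2 ⟨?_, ?_⟩
        · rw [Matrix.mulVec_add, Matrix.mulVec_smul, h1, h3]; simp
        · rw [Matrix.mulVec_add, Matrix.mulVec_smul, add_add_add_comm, h2, ← smul_add, h4]; simp
      have hEq : αQ = αP := by
        suffices hS : {a : ℝ | 0 ≤ a ∧ (s + a • h) ∈
                {s' : Fin mB → ℝ |
                  (∃ x : Fin n → ℝ, M.mulVec (Sum.elim x s') = Sum.elim b d) ∧ 0 ≤ s'}} =
            {a : ℝ | 0 ≤ a ∧ (x + a • g) ∈
                {x : Fin n → ℝ | A.mulVec x = b ∧ B.mulVec x ≤ d}} by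
          rw [hS] at hQ
          exact hQ.unique hP
        ext a
        obtain ⟨h5, h6⟩ := (hk _ _ _ _).1 (hall a)
        constructor
        · rintro ⟨ha, -, hb⟩
          refine ⟨ha, h5, ?_⟩
          rw [← h6]
          exact le_add_of_nonneg_right hb
        · rintro ⟨ha, -, hb⟩
          refine ⟨ha, ⟨_, hall a⟩, ?_⟩
          rw [← h6] at hb
          exact (le_add_iff_nonneg_right _).1 hb
      rw [← hEq]
      exact hψ _ _ (hall αQ)
end
end
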